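/- arXiv:2104.00989 — 6 statements merged into one kernel-verified Lean document; each statement's English description precedes it below -/
import Mathlib

section
/- For all natural numbers m and n, the identity ∑_{k=1}^{m} q^{n−m−1+2k} − ∑_{k=m+1}^{m+n} q^{3m+n+1−2k} = [m−n] holds in K = RatFunc ℚ. (This is the paper's claim that under the Reshetikhin–Turaev functor for U_q(gl(m|n)), a clockwise or counter-clockwise oriented circle evaluates to the quantum integer [m−n]: it is the composite of the coevaluation 1 ↦ ∑_k x_k ⊗ x_k* with the weighted evaluation x_k ⊗ x_k* ↦ q^{n−m−1+2k} for k ≤ m and x_k ⊗ x_k* ↦ −q^{3m+n+1−2k} for k > m.) -/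
noncomputable section

/-- The base field `K = ℚ(q)`. -/
abbrev K : Type := RatFunc ℚ

/-- The variable `q`. -/
def q : K := RatFunc.X

/-- The quantum integer `[d] = (q^d - q^{-d})/(q - q⁻¹)`. -/
def qint (d : ℤ) : K := (q ^ d - q ^ (-d)) / (q - q⁻¹)

theorem q_ne : q ≠ 0 := RatFunc.X_ne_zero

theorem q_sub_ne : q - q⁻¹ ≠ 0 := by
  intro h
  have h1 : q * q = 1 := by
    have := q_ne
    field_simp at h
    linear_combination h
  have h2 : (Polynomial.X * Polynomial.X : Polynomial ℚ) = 1 := by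
    apply RatFunc.algebraMap_injective ℚ
    simpa [q] using h1
  have h3 := congrArg (Polynomial.eval 0) h2
  simp at h3

theorem sum_up (a : ℤ) (m : ℕ) :
    (∑ k ∈ Finset.Icc 1 m, q ^ (a + 2 * (k : ℤ))) * (q - q⁻¹)
      = q ^ (a + 2 * (m : ℤ) + 1) - q ^ (a + 1) := by
  have hq := q_ne
  induction m with
  | zero => simp
  | succ m ih =>
    rw [Finset.sum_Icc_succ_top (by omega), add_mul, ih, mul_sub,
      ← zpow_add_one₀ hq, ← zpow_sub_one₀ hq]
    have e : a + 2 * ((m + 1 : ℕ) : ℤ) - 1 = a + 2 * (m : ℤ) + 1 := by push_cast; ring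
    rw [e]
    ring

theorem sum_down (a : ℤ) (m n : ℕ) :
    (∑ k ∈ Finset.Icc (m + 1) (m + n), q ^ (a - 2 * (k : ℤ))) * (q - q⁻¹)
      = q ^ (a - 2 * (m : ℤ) - 1) - q ^ (a - 2 * (m + n : ℤ) - 1) := by
  have hq := q_ne
  induction n with
  | zero => simp
  | succ n ih =>
    rw [← add_assoc, Finset.sum_Icc_succ_top (by omega), add_mul, ih, mul_sub,
      ← zpow_add_one₀ hq, ← zpow_sub_one₀ hq]
    have e : a - 2 * ((m + n + 1 : ℕ) : ℤ) + 1 = a - 2 * (m + n : ℤ) - 1 := by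
      push_cast; ring
    rw [e]
    push_cast
    rw [← add_assoc]
    ring

/-- Under the Reshetikhin–Turaev functor for `U_q(gl(m|n))`, the evaluation of a
circle (coevaluation `1 ↦ ∑ₖ xₖ ⊗ xₖ*` followed by the weighted evaluation
`xₖ ⊗ xₖ* ↦ q^{n-m-1+2k}` for `k ≤ m` and `xₖ ⊗ xₖ* ↦ -q^{3m+n+1-2k}` for `k > m`)
equals the quantum integer `[m-n]`. -/
theorem circle_evaluates_to_qint (m n : ℕ) :
    (∑ k ∈ Finset.Icc 1 m, q ^ ((n : ℤ) - (m : ℤ) - 1 + 2 * (k : ℤ)))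
      - (∑ k ∈ Finset.Icc (m + 1) (m + n), q ^ (3 * (m : ℤ) + (n : ℤ) + 1 - 2 * (k : ℤ)))
      = qint ((m : ℤ) - (n : ℤ)) := by
  rw [qint, eq_div_iff q_sub_ne, sub_mul, sum_up, sum_down]
  have e1 : (n : ℤ) - m - 1 + 2 * m + 1 = m + n := by ring
  have e2 : (n : ℤ) - m - 1 + 1 = -(m - n) := by ring
  have e3 : 3 * (m : ℤ) + n + 1 - 2 * m - 1 = m + n := by ring
  have e4 : 3 * (m : ℤ) + n + 1 - 2 * (m + n) - 1 = m - n := by ring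
  rw [e1, e2, e3, e4]
  ring
end
end

section
/- The R-matrix R satisfies the Yang–Baxter equation on V ⊗ V ⊗ V: (R ⊗ Id_V) ∘ (Id_V ⊗ R) ∘ (R ⊗ Id_V) = (Id_V ⊗ R) ∘ (R ⊗ Id_V) ∘ (Id_V ⊗ R). (This is the Reidemeister III part of the paper's theorem that the explicit crossing assignment induces a functor from the quantized oriented Brauer category to representations of U_q(gl(m|n)).) -/
noncomputable section

/-- The super sign `(-1)^{|i||j|}`, where the parity `|i|` of an index
`i : Fin (m+n)` (0-based) is `0` if `i < m` and `1` otherwise. -/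
def sgn (m : ℕ) {M : ℕ} (i j : Fin M) : K :=
  if m ≤ (i : ℕ) ∧ m ≤ (j : ℕ) then -1 else 1

/-- The matrix (in the standard basis of `V ⊗ V`, `V = K^{m+n}`, indices 0-based)
of the `U_q(gl(m|n))` R-matrix: `R(eᵢ ⊗ eᵢ) = q⁻¹ eᵢ ⊗ eᵢ` for `i` of parity 0,
`R(eᵢ ⊗ eᵢ) = -q eᵢ ⊗ eᵢ` for `i` of parity 1,
`R(eᵢ ⊗ eⱼ) = (-1)^{|i||j|} eⱼ ⊗ eᵢ` for `i < j`, and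
`R(eᵢ ⊗ eⱼ) = (-1)^{|i||j|} eⱼ ⊗ eᵢ + (q⁻¹ - q) eᵢ ⊗ eⱼ` for `i > j`.
Entry `(p, r)` is the coefficient of `e_{p.1} ⊗ e_{p.2}` in `R(e_{r.1} ⊗ e_{r.2})`. -/
def Rmat (m n : ℕ) :
    Matrix (Fin (m + n) × Fin (m + n)) (Fin (m + n) × Fin (m + n)) K :=
  fun p r =>
    if r.1 = r.2 then
      (if p = r then (if (r.1 : ℕ) < m then q⁻¹ else -q) else 0)
    else
      (if p.1 = r.2 ∧ p.2 = r.1 then sgn m r.1 r.2 else 0)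
        + (if r.2 < r.1 ∧ p = r then q⁻¹ - q else 0)

/-- The matrix of `R ⊗ Id_V` acting on `V ⊗ V ⊗ V`. -/
def R12 (m n : ℕ) :
    Matrix (Fin (m + n) × Fin (m + n) × Fin (m + n))
      (Fin (m + n) × Fin (m + n) × Fin (m + n)) K :=
  fun p r => Rmat m n (p.1, p.2.1) (r.1, r.2.1) * (if p.2.2 = r.2.2 then 1 else 0)

/-- The matrix of `Id_V ⊗ R` acting on `V ⊗ V ⊗ V`. -/
def R23 (m n : ℕ) :
    Matrix (Fin (m + n) × Fin (m + n) × Fin (m + n))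
      (Fin (m + n) × Fin (m + n) × Fin (m + n)) K :=
  fun p r => (if p.1 = r.1 then 1 else 0) * Rmat m n (p.2.1, p.2.2) (r.2.1, r.2.2)

def ybA (m : ℕ) {M : ℕ} (i j : Fin M) : K :=
  if i = j then (if (i : ℕ) < m then q⁻¹ else -q) else if j < i then q⁻¹ - q else 0

def ybB (m : ℕ) {M : ℕ} (i j : Fin M) : K :=
  if i = j then 0 else sgn m i j

lemma Rmat_eq (m n : ℕ) (a b i j : Fin (m + n)) :
    Rmat m n (a, b) (i, j) = (if a = i ∧ b = j then ybA m i j else 0)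
      + (if a = j ∧ b = i then ybB m i j else 0) := by
  unfold Rmat ybA ybB
  by_cases h : i = j
  · simp [h]
  · by_cases h2 : j < i
    · simp [h, h2, add_comm]
    · simp [h, h2]

lemma mul_R12 (m n : ℕ) (M : Matrix (Fin (m + n) × Fin (m + n) × Fin (m + n))
      (Fin (m + n) × Fin (m + n) × Fin (m + n)) K) (s) (i j k : Fin (m + n)) :
    (M * R12 m n) s (i, j, k) = ybA m i j * M s (i, j, k) + ybB m i j * M s (j, i, k) := by
  have h : ∀ x : Fin (m + n) × Fin (m + n) × Fin (m + n), M s x * R12 m n x (i, j, k) =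
      (if x = (i, j, k) then ybA m i j * M s x else 0)
      + (if x = (j, i, k) then ybB m i j * M s x else 0) := by
    rintro ⟨a, b, c⟩
    simp only [R12, Rmat_eq, Prod.mk.injEq]
    by_cases hc : c = k
    · simp only [hc, and_true, if_true, mul_one, mul_add, mul_ite, mul_zero, mul_comm (M s _), add_mul, ite_mul, zero_mul]
    · simp [hc]
  rw [Matrix.mul_apply, Finset.sum_congr rfl (fun x _ => h x), Finset.sum_add_distrib]
  simp

lemma mul_R23 (m n : ℕ) (M : Matrix (Fin (m + n) × Fin (m + n) × Fin (m + n))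
      (Fin (m + n) × Fin (m + n) × Fin (m + n)) K) (s) (i j k : Fin (m + n)) :
    (M * R23 m n) s (i, j, k) = ybA m j k * M s (i, j, k) + ybB m j k * M s (i, k, j) := by
  have h : ∀ x : Fin (m + n) × Fin (m + n) × Fin (m + n), M s x * R23 m n x (i, j, k) =
      (if x = (i, j, k) then ybA m j k * M s x else 0)
      + (if x = (i, k, j) then ybB m j k * M s x else 0) := by
    rintro ⟨a, b, c⟩
    simp only [R23, Rmat_eq, Prod.mk.injEq]
    by_cases hc : a = i
    · simp only [hc, true_and, if_true, one_mul, mul_add, mul_ite, mul_zero, mul_comm (M s _), add_mul, ite_mul, zero_mul]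
    · simp [hc]
  rw [Matrix.mul_apply, Finset.sum_congr rfl (fun x _ => h x), Finset.sum_add_distrib]
  simp

lemma ybA_self (m : ℕ) {M : ℕ} (i : Fin M) :
    ybA m i i * ybA m i i = (q⁻¹ - q) * ybA m i i + 1 := by
  have hq : q * q⁻¹ = 1 := mul_inv_cancel₀ RatFunc.X_ne_zero
  unfold ybA
  simp only [if_true]
  split_ifs <;> linear_combination hq

lemma ybA_lt (m : ℕ) {M : ℕ} {i j : Fin M} (h : i < j) : ybA m i j = 0 := by
  simp [ybA, h.ne, h.not_gt]

lemma ybA_gt (m : ℕ) {M : ℕ} {i j : Fin M} (h : i < j) : ybA m j i = q⁻¹ - q := by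
  simp [ybA, h.ne', h]

lemma ybB_self (m : ℕ) {M : ℕ} (i : Fin M) : ybB m i i = 0 := by
  simp [ybB]

lemma ybB_symm (m : ℕ) {M : ℕ} {i j : Fin M} (h : i < j) : ybB m j i = ybB m i j := by
  simp [ybB, h.ne, h.ne', sgn, and_comm]

lemma ybB_sq (m : ℕ) {M : ℕ} {i j : Fin M} (h : i < j) : ybB m i j * ybB m i j = 1 := by
  simp only [ybB, h.ne, sgn, if_false]
  split_ifs <;> norm_num

/-- The R-matrix of `U_q(gl(m|n))` satisfies the Yang–Baxter equation on
`V ⊗ V ⊗ V`: `(R ⊗ Id) ∘ (Id ⊗ R) ∘ (R ⊗ Id) = (Id ⊗ R) ∘ (R ⊗ Id) ∘ (Id ⊗ R)`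
(matrix multiplication corresponds to composition of the linear maps). -/
theorem yang_baxter (m n : ℕ) :
    R12 m n * R23 m n * R12 m n = R23 m n * R12 m n * R23 m n := by
  ext s ⟨i, j, k⟩
  rw [← one_mul (R12 m n), ← one_mul (R23 m n)]
  simp only [← mul_assoc, mul_one]
  simp only [mul_R12, mul_R23]
  generalize (1 : Matrix (Fin (m + n) × Fin (m + n) × Fin (m + n))
      (Fin (m + n) × Fin (m + n) × Fin (m + n)) K) s = f
  have hA := fun i : Fin (m + n) => ybA_self m i
  have hi := hA i
  have hj := hA j
  have hk := hA k
  clear hA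
  rcases lt_trichotomy i j with h1 | h1 | h1 <;> rcases lt_trichotomy j k with h2 | h2 | h2 <;>
    rcases lt_trichotomy i k with h3 | h3 | h3 <;>
    first
    | (exfalso; omega)
    | (try subst h1
       try subst h2
       try subst h3
       try have e1 := ybB_sq m h1
       try have e2 := ybB_sq m h2
       try have e3 := ybB_sq m h3
       try simp only [ybA_lt m h1, ybA_gt m h1, ybB_symm m h1]
       try simp only [ybA_lt m h2, ybA_gt m h2, ybB_symm m h2]
       try simp only [ybA_lt m h3, ybA_gt m h3, ybB_symm m h3]
       try simp only [ybB_self]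
       try clear h1
       try clear h2
       try clear h3
       try generalize q⁻¹ - q = z at *
       try grind)
end
end

section
/- The R-matrix is an intertwiner for the quantum group action on V ⊗ V: for every i with 1 ≤ i ≤ m − 1, R ∘ Δ(E_i) = Δ(E_i) ∘ R and R ∘ Δ(F_i) = Δ(F_i) ∘ R, and for every j with 1 ≤ j ≤ m, R ∘ Δ(L_j) = Δ(L_j) ∘ R. (This expresses that the crossing assignment of the Reshetikhin–Turaev functor lands in U_q(gl_m)-module endomorphisms of V ⊗ V.) -/
set_option synthInstance.maxHeartbeats 400000
set_option maxHeartbeats 1000000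

noncomputable section

/-- The elementary matrix `E_i` (0-based: single `1` in position `(i, i+1)`). -/
def Emat (M : ℕ) (i : ℕ) : Matrix (Fin M) (Fin M) K :=
  fun a b => if (a : ℕ) = i ∧ (b : ℕ) = i + 1 then 1 else 0

/-- The elementary matrix `F_i` (0-based: single `1` in position `(i+1, i)`). -/
def Fmat (M : ℕ) (i : ℕ) : Matrix (Fin M) (Fin M) K :=
  fun a b => if (a : ℕ) = i + 1 ∧ (b : ℕ) = i then 1 else 0

/-- The diagonal matrix `L_j` with entry `q` in (0-based) position `j` and `1`
elsewhere. -/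
def Lmat (M : ℕ) (j : ℕ) : Matrix (Fin M) (Fin M) K :=
  Matrix.diagonal (fun t => if (t : ℕ) = j then q else 1)

/-- The inverse `L_j⁻¹` of `Lmat`. -/
def LmatInv (M : ℕ) (j : ℕ) : Matrix (Fin M) (Fin M) K :=
  Matrix.diagonal (fun t => if (t : ℕ) = j then q⁻¹ else 1)

/-- The diagonal matrix `K_i = L_i L_{i+1}⁻¹` with entries `q` at position `i`
and `q⁻¹` at position `i+1` (0-based). -/
def Kmat (M : ℕ) (i : ℕ) : Matrix (Fin M) (Fin M) K :=
  Matrix.diagonal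
    (fun t => if (t : ℕ) = i then q else if (t : ℕ) = i + 1 then q⁻¹ else 1)

/-- The inverse `K_i⁻¹` of `Kmat`. -/
def KmatInv (M : ℕ) (i : ℕ) : Matrix (Fin M) (Fin M) K :=
  Matrix.diagonal
    (fun t => if (t : ℕ) = i then q⁻¹ else if (t : ℕ) = i + 1 then q else 1)

/-- The Kronecker product of two `M × M` matrices, acting on `V ⊗ V` with
`V = K^M`: `(A ⊗ B)(eᵢ ⊗ eⱼ) = (A eᵢ) ⊗ (B eⱼ)`. -/
def kron2 {M : ℕ} (A B : Matrix (Fin M) (Fin M) K) :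
    Matrix (Fin M × Fin M) (Fin M × Fin M) K :=
  fun p r => A p.1 r.1 * B p.2 r.2

/-- The matrix (in the standard basis of `V ⊗ V`, `V = K^m`, indices 0-based) of
the `n = 0` R-matrix: `R(eᵢ ⊗ eᵢ) = q⁻¹ eᵢ ⊗ eᵢ`, `R(eᵢ ⊗ eⱼ) = eⱼ ⊗ eᵢ` for
`i < j`, and `R(eᵢ ⊗ eⱼ) = eⱼ ⊗ eᵢ + (q⁻¹ - q) eᵢ ⊗ eⱼ` for `i > j`. -/
def R0mat (m : ℕ) : Matrix (Fin m × Fin m) (Fin m × Fin m) K :=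
  fun p r =>
    if r.1 = r.2 then (if p = r then q⁻¹ else 0)
    else (if p.1 = r.2 ∧ p.2 = r.1 then 1 else 0)
      + (if r.2 < r.1 ∧ p = r then q⁻¹ - q else 0)

/-- The coproduct operator `Δ(E_i) = E_i ⊗ K_i⁻¹ + 1 ⊗ E_i` on `V ⊗ V`. -/
def DeltaE2 (m i : ℕ) : Matrix (Fin m × Fin m) (Fin m × Fin m) K :=
  kron2 (Emat m i) (KmatInv m i) + kron2 1 (Emat m i)

/-- The coproduct operator `Δ(F_i) = F_i ⊗ 1 + K_i ⊗ F_i` on `V ⊗ V`. -/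
def DeltaF2 (m i : ℕ) : Matrix (Fin m × Fin m) (Fin m × Fin m) K :=
  kron2 (Fmat m i) 1 + kron2 (Kmat m i) (Fmat m i)

/-- The coproduct operator `Δ(L_j) = L_j ⊗ L_j` on `V ⊗ V`. -/
def DeltaL2 (m j : ℕ) : Matrix (Fin m × Fin m) (Fin m × Fin m) K :=
  kron2 (Lmat m j) (Lmat m j)

theorem R_mul_apply (m : ℕ) (A : Matrix (Fin m × Fin m) (Fin m × Fin m) K)
    (a b : Fin m) (r : Fin m × Fin m) :
    (R0mat m * A) (a, b) r = if a = b then q⁻¹ * A (a, b) r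
      else A (b, a) r + if b < a then (q⁻¹ - q) * A (a, b) r else 0 := by
  rw [Matrix.mul_apply]
  by_cases h : a = b
  · subst h
    rw [Finset.sum_eq_single (a, a)]
    · simp [R0mat]
    · rintro ⟨c, d⟩ _ hne
      have : R0mat m (a, a) (c, d) = 0 := by
        simp only [R0mat, Prod.mk.injEq, ne_eq] at *
        grind
      rw [this, zero_mul]
    · simp
  · have key : ∀ s, R0mat m (a, b) s * A s r = (if s = (b, a) then A (b, a) r else 0)
        + (if s = (a, b) then (if b < a then (q⁻¹ - q) * A (a, b) r else 0) else 0) := by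
      rintro ⟨c, d⟩
      simp only [R0mat, Prod.mk.injEq]
      grind
    simp only [key, Finset.sum_add_distrib, Finset.sum_ite_eq', Finset.sum_ite_eq,
      Finset.mem_univ, if_true, if_neg h]

theorem mul_R_apply (m : ℕ) (A : Matrix (Fin m × Fin m) (Fin m × Fin m) K)
    (a b : Fin m) (r : Fin m × Fin m) :
    (A * R0mat m) r (a, b) = if a = b then q⁻¹ * A r (a, b)
      else A r (b, a) + if b < a then (q⁻¹ - q) * A r (a, b) else 0 := by
  rw [Matrix.mul_apply]
  by_cases h : a = b
  · subst h
    rw [Finset.sum_eq_single (a, a)]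
    · simp [R0mat, mul_comm]
    · rintro ⟨c, d⟩ _ hne
      have : R0mat m (c, d) (a, a) = 0 := by
        simp only [R0mat, Prod.mk.injEq, ne_eq] at *
        grind
      rw [this, mul_zero]
    · simp
  · have key : ∀ s, A r s * R0mat m s (a, b) = (if s = (b, a) then A r (b, a) else 0)
        + (if s = (a, b) then (if b < a then (q⁻¹ - q) * A r (a, b) else 0) else 0) := by
      rintro ⟨c, d⟩
      simp only [R0mat, Prod.mk.injEq]
      grind
    simp only [key, Finset.sum_add_distrib, Finset.sum_ite_eq', Finset.sum_ite_eq,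
      Finset.mem_univ, if_true, if_neg h]

/-- The R-matrix is an intertwiner for the quantum group action on `V ⊗ V`: it
commutes with `Δ(E_i)`, `Δ(F_i)` for `1 ≤ i ≤ m-1` (here 0-based: `i + 1 < m`)
and with `Δ(L_j)` for `1 ≤ j ≤ m` (here 0-based: `j < m`). Matrix products
correspond to compositions of the linear maps. -/
theorem R_matrix_intertwiner (m : ℕ) :
    (∀ i : ℕ, i + 1 < m →
      R0mat m * DeltaE2 m i = DeltaE2 m i * R0mat m ∧
      R0mat m * DeltaF2 m i = DeltaF2 m i * R0mat m) ∧
    (∀ j : ℕ, j < m →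
      R0mat m * DeltaL2 m j = DeltaL2 m j * R0mat m) := by
  have hq : q ≠ 0 := RatFunc.X_ne_zero
  have hqq : q * q⁻¹ = 1 := mul_inv_cancel₀ hq
  refine ⟨fun i hi => ⟨?_, ?_⟩, fun j hj => ?_⟩
  · ext ⟨a, b⟩ ⟨c, d⟩
    rw [R_mul_apply, mul_R_apply]
    simp only [DeltaE2, kron2, Emat, KmatInv, Matrix.add_apply, Matrix.one_apply,
      Matrix.diagonal_apply, Fin.ext_iff, Fin.lt_def]
    generalize q⁻¹ = p at *
    generalize (a : ℕ) = a, (b : ℕ) = b, (c : ℕ) = c, (d : ℕ) = d at *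
    grind (splits := 30)
  · ext ⟨a, b⟩ ⟨c, d⟩
    rw [R_mul_apply, mul_R_apply]
    simp only [DeltaF2, kron2, Fmat, Kmat, Matrix.add_apply, Matrix.one_apply,
      Matrix.diagonal_apply, Fin.ext_iff, Fin.lt_def]
    generalize q⁻¹ = p at *
    generalize (a : ℕ) = a, (b : ℕ) = b, (c : ℕ) = c, (d : ℕ) = d at *
    grind (splits := 30)
  · ext ⟨a, b⟩ ⟨c, d⟩
    rw [R_mul_apply, mul_R_apply]
    simp only [DeltaL2, kron2, Lmat, Matrix.diagonal_apply, Fin.ext_iff, Fin.lt_def]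
    generalize q⁻¹ = p at *
    generalize (a : ℕ) = a, (b : ℕ) = b, (c : ℕ) = c, (d : ℕ) = d at *
    grind (splits := 30)
end
end

section
/- The two actions commute (the easy half of quantum Schur–Weyl duality): for every N ≥ 2, every i with 1 ≤ i ≤ N−1 and every j with 1 ≤ j ≤ m−1, the Hecke operator R_i := Id^{⊗(i−1)} ⊗ R ⊗ Id^{⊗(N−i−1)} on V^{⊗N} commutes with each of the iterated-coproduct operators Δ^{(N)}(E_j) = ∑_{k=1}^{N} Id^{⊗(k−1)} ⊗ E_j ⊗ (K_j^{−1})^{⊗(N−k)}, Δ^{(N)}(F_j) = ∑_{k=1}^{N} K_j^{⊗(k−1)} ⊗ F_j ⊗ Id^{⊗(N−k)}, and Δ^{(N)}(L_l) = L_l^{⊗N} for 1 ≤ l ≤ m. -/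
set_option synthInstance.maxHeartbeats 400000
set_option maxHeartbeats 1000000

noncomputable section

/-- The Hecke operator `R_i = Id^{⊗i} ⊗ R ⊗ Id^{⊗(N-i-2)}` on `V^{⊗N}`
(0-based: it acts by the R-matrix on tensor factors `i` and `i+1` and by the
identity elsewhere). -/
def Rop0 (m N : ℕ) (i : ℕ) (h : i + 1 < N) :
    Matrix (Fin N → Fin m) (Fin N → Fin m) K :=
  fun f g =>
    R0mat m (f ⟨i, Nat.lt_of_succ_lt h⟩, f ⟨i + 1, h⟩)
        (g ⟨i, Nat.lt_of_succ_lt h⟩, g ⟨i + 1, h⟩) *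
      ∏ t : Fin N, (if (t : ℕ) = i ∨ (t : ℕ) = i + 1 then 1
        else if f t = g t then 1 else 0)

/-- The operator `B^{⊗(k-1)} ⊗ A ⊗ C^{⊗(N-k)}` on `V^{⊗N}`: `B` on tensor
factors before position `k`, `A` at `k`, and `C` after `k`. -/
def place (m N : ℕ) (B A C : Matrix (Fin m) (Fin m) K) (k : Fin N) :
    Matrix (Fin N → Fin m) (Fin N → Fin m) K :=
  fun f g => ∏ t : Fin N,
    (if t < k then B (f t) (g t)
     else if t = k then A (f t) (g t) else C (f t) (g t))

/-- The Kronecker power `A^{⊗N}` acting on `V^{⊗N}`. -/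
def kpow (m N : ℕ) (A : Matrix (Fin m) (Fin m) K) :
    Matrix (Fin N → Fin m) (Fin N → Fin m) K :=
  fun f g => ∏ t : Fin N, A (f t) (g t)

/-- The iterated coproduct operator
`Δ^{(N)}(E_j) = ∑ₖ Id^{⊗(k-1)} ⊗ E_j ⊗ (K_j⁻¹)^{⊗(N-k)}` on `V^{⊗N}`. -/
def DeltaEN (m N j : ℕ) : Matrix (Fin N → Fin m) (Fin N → Fin m) K :=
  ∑ k : Fin N, place m N 1 (Emat m j) (KmatInv m j) k

/-- The iterated coproduct operator
`Δ^{(N)}(F_j) = ∑ₖ K_j^{⊗(k-1)} ⊗ F_j ⊗ Id^{⊗(N-k)}` on `V^{⊗N}`. -/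
def DeltaFN (m N j : ℕ) : Matrix (Fin N → Fin m) (Fin N → Fin m) K :=
  ∑ k : Fin N, place m N (Kmat m j) (Fmat m j) 1 k


theorem R0_mul (m : ℕ) (X : Matrix (Fin m × Fin m) (Fin m × Fin m) K) (a b : Fin m)
    (r : Fin m × Fin m) :
    (R0mat m * X) (a, b) r = if a = b then q⁻¹ * X (a, b) r
      else X (b, a) r + if b < a then (q⁻¹ - q) * X (a, b) r else 0 := by
  have h1 : ∀ s : Fin m × Fin m, R0mat m (a, b) s * X s r =
      (if s = (a, b) then (if a = b then q⁻¹ else if b < a then q⁻¹ - q else 0) * X s r else 0)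
      + (if s = (b, a) then (if a = b then 0 else 1) * X s r else 0) := by
    rintro ⟨c, d⟩
    simp only [R0mat, Prod.mk.injEq]
    grind
  rw [Matrix.mul_apply, Finset.sum_congr rfl (fun s _ => h1 s), Finset.sum_add_distrib]
  simp only [Finset.sum_ite_eq', Finset.mem_univ, if_true]
  split_ifs <;> ring

theorem mul_R0 (m : ℕ) (X : Matrix (Fin m × Fin m) (Fin m × Fin m) K) (a b : Fin m)
    (r : Fin m × Fin m) :
    (X * R0mat m) r (a, b) = if a = b then q⁻¹ * X r (a, b)
      else X r (b, a) + if b < a then (q⁻¹ - q) * X r (a, b) else 0 := by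
  have h1 : ∀ s : Fin m × Fin m, X r s * R0mat m s (a, b) =
      (if s = (a, b) then (if a = b then q⁻¹ else if b < a then q⁻¹ - q else 0) * X r s else 0)
      + (if s = (b, a) then (if a = b then 0 else 1) * X r s else 0) := by
    rintro ⟨c, d⟩
    simp only [R0mat, Prod.mk.injEq]
    grind
  rw [Matrix.mul_apply, Finset.sum_congr rfl (fun s _ => h1 s), Finset.sum_add_distrib]
  simp only [Finset.sum_ite_eq', Finset.mem_univ, if_true]
  split_ifs <;> ring

theorem R0_diag (m : ℕ) (d : Fin m → K) :
    R0mat m * kron2 (Matrix.diagonal d) (Matrix.diagonal d)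
      = kron2 (Matrix.diagonal d) (Matrix.diagonal d) * R0mat m := by
  ext ⟨a, b⟩ ⟨c, e⟩
  rw [R0_mul, mul_R0]
  simp only [kron2, Matrix.diagonal_apply]
  grind

theorem R0_E (m j : ℕ) :
    R0mat m * (kron2 (Emat m j) (KmatInv m j) + kron2 1 (Emat m j))
      = (kron2 (Emat m j) (KmatInv m j) + kron2 1 (Emat m j)) * R0mat m := by
  have hq := q_ne
  have hq' : q * q⁻¹ = 1 := mul_inv_cancel₀ hq
  ext ⟨a, b⟩ ⟨c, e⟩
  rw [R0_mul, mul_R0]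
  simp only [kron2, Matrix.add_apply, KmatInv, Emat, Matrix.diagonal_apply, Matrix.one_apply,
    Fin.ext_iff, Fin.lt_def]
  generalize q⁻¹ = u at *
  generalize q = v at *
  obtain ⟨a, _⟩ := a
  obtain ⟨b, _⟩ := b
  obtain ⟨c, _⟩ := c
  obtain ⟨e, _⟩ := e
  dsimp only
  clear hq
  grind (splits := 40)

theorem R0_F (m j : ℕ) :
    R0mat m * (kron2 (Fmat m j) 1 + kron2 (Kmat m j) (Fmat m j))
      = (kron2 (Fmat m j) 1 + kron2 (Kmat m j) (Fmat m j)) * R0mat m := by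
  have hq := q_ne
  have hq' : q * q⁻¹ = 1 := mul_inv_cancel₀ hq
  ext ⟨a, b⟩ ⟨c, e⟩
  rw [R0_mul, mul_R0]
  simp only [kron2, Matrix.add_apply, Kmat, Fmat, Matrix.diagonal_apply, Matrix.one_apply,
    Fin.ext_iff, Fin.lt_def]
  generalize q⁻¹ = u at *
  generalize q = v at *
  obtain ⟨a, _⟩ := a
  obtain ⟨b, _⟩ := b
  obtain ⟨c, _⟩ := c
  obtain ⟨e, _⟩ := e
  dsimp only
  clear hq
  grind (splits := 40)

/-- Replace the entries at sites `i`, `i+1`. -/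
def upd2 {m N : ℕ} (i : ℕ) (f : Fin N → Fin m) (p : Fin m × Fin m) : Fin N → Fin m :=
  fun t => if (t : ℕ) = i then p.1 else if (t : ℕ) = i + 1 then p.2 else f t

theorem upd2_inj {m N : ℕ} (i : ℕ) (hi : i + 1 < N) (f : Fin N → Fin m) :
    Function.Injective (upd2 i f) := by
  rintro ⟨a, b⟩ ⟨c, d⟩ h
  have h1 := congrFun h ⟨i, Nat.lt_of_succ_lt hi⟩
  have h2 := congrFun h ⟨i + 1, hi⟩
  simp [upd2] at h1 h2
  simp [h1, h2]

theorem prod_ind {m N : ℕ} (i : ℕ) (f g : Fin N → Fin m) :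
    (∏ t : Fin N, (if (t : ℕ) = i ∨ (t : ℕ) = i + 1 then (1 : K)
        else if f t = g t then 1 else 0))
      = if (∀ t : Fin N, ¬ ((t : ℕ) = i ∨ (t : ℕ) = i + 1) → f t = g t) then 1 else 0 := by
  split_ifs with h
  · apply Finset.prod_eq_one
    intro t _
    have := h t
    grind
  · push Not at h
    obtain ⟨t, ht, hne⟩ := h
    apply Finset.prod_eq_zero (Finset.mem_univ t)
    grind

theorem Rop_mul (m N i : ℕ) (hi : i + 1 < N) (M : Matrix (Fin N → Fin m) (Fin N → Fin m) K)
    (f g : Fin N → Fin m) :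
    (Rop0 m N i hi * M) f g = ∑ p : Fin m × Fin m,
      R0mat m (f ⟨i, Nat.lt_of_succ_lt hi⟩, f ⟨i + 1, hi⟩) p * M (upd2 i f p) g := by
  rw [Matrix.mul_apply]
  symm
  apply Fintype.sum_of_injective (upd2 i f) (upd2_inj i hi f)
  · intro h hh
    simp only [Rop0, prod_ind]
    rw [if_neg, mul_zero, zero_mul]
    intro h3
    apply hh
    refine ⟨(h ⟨i, Nat.lt_of_succ_lt hi⟩, h ⟨i + 1, hi⟩), ?_⟩
    funext t
    have := h3 t
    simp only [upd2]
    grind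
  · intro p
    simp only [Rop0, prod_ind]
    rw [if_pos]
    · simp [upd2]
    · intro t ht
      simp only [upd2]
      grind

theorem mul_Rop (m N i : ℕ) (hi : i + 1 < N) (M : Matrix (Fin N → Fin m) (Fin N → Fin m) K)
    (f g : Fin N → Fin m) :
    (M * Rop0 m N i hi) f g = ∑ p : Fin m × Fin m,
      M f (upd2 i g p) * R0mat m p (g ⟨i, Nat.lt_of_succ_lt hi⟩, g ⟨i + 1, hi⟩) := by
  rw [Matrix.mul_apply]
  symm
  apply Fintype.sum_of_injective (upd2 i g) (upd2_inj i hi g)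
  · intro h hh
    simp only [Rop0, prod_ind]
    rw [if_neg, mul_zero, mul_zero]
    intro h3
    apply hh
    refine ⟨(h ⟨i, Nat.lt_of_succ_lt hi⟩, h ⟨i + 1, hi⟩), ?_⟩
    funext t
    have := h3 t
    simp only [upd2]
    grind
  · intro p
    simp only [Rop0, prod_ind]
    rw [if_pos]
    · simp [upd2]
    · intro t ht
      simp only [upd2]
      grind

/-- Operator acting by `X` at sites `i`, `i+1`, and by `A t` elsewhere. -/
def Wop (m N i : ℕ) (hi : i + 1 < N) (X : Matrix (Fin m × Fin m) (Fin m × Fin m) K)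
    (A : Fin N → Matrix (Fin m) (Fin m) K) : Matrix (Fin N → Fin m) (Fin N → Fin m) K :=
  fun f g => X (f ⟨i, Nat.lt_of_succ_lt hi⟩, f ⟨i + 1, hi⟩)
        (g ⟨i, Nat.lt_of_succ_lt hi⟩, g ⟨i + 1, hi⟩) *
      ∏ t : Fin N, (if (t : ℕ) = i ∨ (t : ℕ) = i + 1 then 1 else A t (f t) (g t))

theorem Wop_comm (m N i : ℕ) (hi : i + 1 < N) (X : Matrix (Fin m × Fin m) (Fin m × Fin m) K)
    (A : Fin N → Matrix (Fin m) (Fin m) K) (hX : R0mat m * X = X * R0mat m) :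
    Rop0 m N i hi * Wop m N i hi X A = Wop m N i hi X A * Rop0 m N i hi := by
  ext f g
  rw [Rop_mul, mul_Rop]
  have hf : ∀ p, Wop m N i hi X A (upd2 i f p) g = X p
        (g ⟨i, Nat.lt_of_succ_lt hi⟩, g ⟨i + 1, hi⟩) *
      ∏ t : Fin N, (if (t : ℕ) = i ∨ (t : ℕ) = i + 1 then 1 else A t (f t) (g t)) := by
    intro p
    simp only [Wop]
    congr 1
    · simp [upd2]
    · apply Finset.prod_congr rfl
      intro t _
      simp only [upd2]
      grind
  have hg : ∀ p, Wop m N i hi X A f (upd2 i g p) =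
      X (f ⟨i, Nat.lt_of_succ_lt hi⟩, f ⟨i + 1, hi⟩) p *
      ∏ t : Fin N, (if (t : ℕ) = i ∨ (t : ℕ) = i + 1 then 1 else A t (f t) (g t)) := by
    intro p
    simp only [Wop]
    congr 1
    · simp [upd2]
    · apply Finset.prod_congr rfl
      intro t _
      simp only [upd2]
      grind
  simp only [hf, hg]
  have h := congrFun (congrFun hX (f ⟨i, Nat.lt_of_succ_lt hi⟩, f ⟨i + 1, hi⟩))
    (g ⟨i, Nat.lt_of_succ_lt hi⟩, g ⟨i + 1, hi⟩)
  rw [Matrix.mul_apply, Matrix.mul_apply] at h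
  simp only [← mul_assoc, mul_right_comm _ (∏ t : Fin N, _) (R0mat m _ _)]
  rw [← Finset.sum_mul, ← Finset.sum_mul, h]

theorem prod_eq_W (m N i : ℕ) (hi : i + 1 < N) (A : Fin N → Matrix (Fin m) (Fin m) K) :
    (fun f g => ∏ t : Fin N, A t (f t) (g t) : Matrix (Fin N → Fin m) (Fin N → Fin m) K) =
      Wop m N i hi (kron2 (A ⟨i, Nat.lt_of_succ_lt hi⟩) (A ⟨i + 1, hi⟩)) A := by
  funext f g
  simp only [Wop, kron2]
  have hne : (⟨i, Nat.lt_of_succ_lt hi⟩ : Fin N) ≠ ⟨i + 1, hi⟩ := by simp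
  have h2 : ∀ t : Fin N, A t (f t) (g t) =
      (if t = ⟨i, Nat.lt_of_succ_lt hi⟩ then A t (f t) (g t) else 1) *
      (if t = ⟨i + 1, hi⟩ then A t (f t) (g t) else 1) *
      (if (t : ℕ) = i ∨ (t : ℕ) = i + 1 then 1 else A t (f t) (g t)) := by
    intro t
    simp only [Fin.ext_iff]
    by_cases h1 : (t : ℕ) = i
    · simp [h1]
    · by_cases h3 : (t : ℕ) = i + 1 <;> simp [h1, h3]
  rw [Finset.prod_congr rfl (fun t _ => h2 t), Finset.prod_mul_distrib, Finset.prod_mul_distrib]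
  simp only [Finset.prod_ite_eq', Finset.mem_univ, if_true]

theorem place_eq (m N i : ℕ) (hi : i + 1 < N) (B A C : Matrix (Fin m) (Fin m) K) (k : Fin N) :
    place m N B A C k = Wop m N i hi
      (kron2 (if i < (k : ℕ) then B else if i = (k : ℕ) then A else C)
        (if i + 1 < (k : ℕ) then B else if i + 1 = (k : ℕ) then A else C))
      (fun t => if t < k then B else if t = k then A else C) := by
  have := prod_eq_W m N i hi (fun t => if t < k then B else if t = k then A else C)
  simp only [Fin.lt_def, Fin.ext_iff] at this ⊢
  rw [← this]
  funext f g
  simp only [place, Fin.lt_def, Fin.ext_iff]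
  apply Finset.prod_congr rfl
  intro t _
  split_ifs <;> rfl

theorem sum_comm_R (m N i : ℕ) (hi : i + 1 < N) (B A C : Matrix (Fin m) (Fin m) K)
    (hB : R0mat m * kron2 B B = kron2 B B * R0mat m)
    (hC : R0mat m * kron2 C C = kron2 C C * R0mat m)
    (hA : R0mat m * (kron2 A C + kron2 B A) = (kron2 A C + kron2 B A) * R0mat m) :
    Rop0 m N i hi * ∑ k : Fin N, place m N B A C k =
      (∑ k : Fin N, place m N B A C k) * Rop0 m N i hi := by
  have hne : (⟨i, Nat.lt_of_succ_lt hi⟩ : Fin N) ≠ ⟨i + 1, hi⟩ := by simp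
  have hpair : place m N B A C ⟨i, Nat.lt_of_succ_lt hi⟩ + place m N B A C ⟨i + 1, hi⟩ =
      Wop m N i hi (kron2 A C + kron2 B A) (fun t => if (t : ℕ) < i then B else C) := by
    rw [place_eq m N i hi, place_eq m N i hi]
    funext f g
    simp only [Wop, Matrix.add_apply, add_mul]
    congr 1
    · congr 1
      · simp
      · apply Finset.prod_congr rfl
        intro t _
        simp only [Fin.lt_def, Fin.ext_iff]
        grind
    · congr 1
      · simp
      · apply Finset.prod_congr rfl
        intro t _
        simp only [Fin.lt_def, Fin.ext_iff]
        grind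
  have hsplit : ∑ k : Fin N, place m N B A C k =
      (place m N B A C ⟨i, Nat.lt_of_succ_lt hi⟩ + place m N B A C ⟨i + 1, hi⟩) +
      ∑ k ∈ (Finset.univ \ {⟨i, Nat.lt_of_succ_lt hi⟩, ⟨i + 1, hi⟩} : Finset (Fin N)),
        place m N B A C k := by
    rw [← Finset.sum_pair hne, add_comm, Finset.sum_sdiff (Finset.subset_univ _)]
  rw [hsplit, mul_add, add_mul, hpair, Wop_comm m N i hi _ _ hA, Finset.mul_sum, Finset.sum_mul]
  congr 1
  apply Finset.sum_congr rfl
  intro k hk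
  simp only [Finset.mem_sdiff, Finset.mem_univ, true_and, Finset.mem_insert,
    Finset.mem_singleton, not_or, Fin.ext_iff] at hk
  rw [place_eq m N i hi]
  apply Wop_comm
  rcases lt_or_ge i (k : ℕ) with h | h
  · have h1 : i + 1 < (k : ℕ) := by omega
    simp only [h, h1, if_true]
    exact hB
  · have h1 : ¬ i < (k : ℕ) := by omega
    have h2 : ¬ i = (k : ℕ) := by omega
    have h3 : ¬ i + 1 < (k : ℕ) := by omega
    have h4 : ¬ i + 1 = (k : ℕ) := by omega
    simp only [h1, h2, h3, h4, if_false]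
    exact hC

theorem R0_one (m : ℕ) :
    R0mat m * kron2 1 1 = kron2 1 1 * R0mat m := by
  rw [← Matrix.diagonal_one]
  exact R0_diag m _

/-- The Hecke-algebra and quantum-group actions on `V^{⊗N}` commute (the easy
half of quantum Schur–Weyl duality): each Hecke operator `R_i` commutes with
each of `Δ^{(N)}(E_j)`, `Δ^{(N)}(F_j)` (`1 ≤ j ≤ m-1`, here 0-based
`j + 1 < m`) and `Δ^{(N)}(L_l) = L_l^{⊗N}` (`1 ≤ l ≤ m`, here 0-based
`l < m`). -/
theorem schur_weyl_actions_commute (m N : ℕ) (hN : 2 ≤ N)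
    (i : ℕ) (hi : i + 1 < N) :
    (∀ j : ℕ, j + 1 < m →
      Rop0 m N i hi * DeltaEN m N j = DeltaEN m N j * Rop0 m N i hi ∧
      Rop0 m N i hi * DeltaFN m N j = DeltaFN m N j * Rop0 m N i hi) ∧
    (∀ l : ℕ, l < m →
      Rop0 m N i hi * kpow m N (Lmat m l) = kpow m N (Lmat m l) * Rop0 m N i hi) := by
  refine ⟨fun j _ => ⟨?_, ?_⟩, fun l _ => ?_⟩
  · exact sum_comm_R m N i hi _ _ _ (R0_one m) (R0_diag m _) (R0_E m j)
  · exact sum_comm_R m N i hi _ _ _ (R0_diag m _) (R0_one m) (R0_F m j)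
  · have h := prod_eq_W m N i hi (fun _ => Lmat m l)
    have h' : kpow m N (Lmat m l) = _ := h
    rw [h']
    exact Wop_comm m N i hi _ _ (R0_diag m _)
end
end

section
/- Quantum Schur–Weyl duality (double centralizer property): for every N ≥ 1, let A ⊆ End_K(V^{⊗N}) be the K-subalgebra generated by the Hecke operators R_i := Id^{⊗(i−1)} ⊗ R ⊗ Id^{⊗(N−i−1)} (1 ≤ i ≤ N−1), and let B ⊆ End_K(V^{⊗N}) be the K-subalgebra generated by the operators Δ^{(N)}(E_j) = ∑_{k=1}^{N} Id^{⊗(k−1)} ⊗ E_j ⊗ (K_j^{−1})^{⊗(N−k)}, Δ^{(N)}(F_j) = ∑_{k=1}^{N} K_j^{⊗(k−1)} ⊗ F_j ⊗ Id^{⊗(N−k)} (1 ≤ j ≤ m−1) and L_l^{⊗N}, (L_l^{−1})^{⊗N} (1 ≤ l ≤ m). Then A and B are each other's centralizers in End_K(V^{⊗N}): the centralizer of A equals B and the centralizer of B equals A. -/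
set_option synthInstance.maxHeartbeats 400000
set_option maxHeartbeats 1000000

noncomputable section

/-- The generating set of the Hecke side: the operators `R_i` (`1 ≤ i ≤ N-1`,
here 0-based `i + 1 < N`) on `V^{⊗N}`. -/
def HeckeGens (m N : ℕ) : Set (Matrix (Fin N → Fin m) (Fin N → Fin m) K) :=
  { X | ∃ (i : ℕ) (h : i + 1 < N), X = Rop0 m N i h }

/-- The generating set of the quantum-group side: the operators `Δ^{(N)}(E_j)`,
`Δ^{(N)}(F_j)` (`1 ≤ j ≤ m-1`, 0-based `j + 1 < m`) and `L_l^{⊗N}`,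
`(L_l⁻¹)^{⊗N}` (`1 ≤ l ≤ m`, 0-based `l < m`) on `V^{⊗N}`. -/
def QGGens (m N : ℕ) : Set (Matrix (Fin N → Fin m) (Fin N → Fin m) K) :=
  { X | (∃ j : ℕ, j + 1 < m ∧ (X = DeltaEN m N j ∨ X = DeltaFN m N j)) ∨
        (∃ l : ℕ, l < m ∧
          (X = kpow m N (Lmat m l) ∨ X = kpow m N (LmatInv m l))) }

namespace SW
open Matrix

section kr
variable {R : Type*} [CommRing R] {m N : ℕ}

def kr (c : Fin N → Matrix (Fin m) (Fin m) R) :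
    Matrix (Fin N → Fin m) (Fin N → Fin m) R :=
  fun f g => ∏ t, c t (f t) (g t)

theorem kr_mul (c d : Fin N → Matrix (Fin m) (Fin m) R) : kr c * kr d = kr (c * d) := by
  ext f g
  simp only [Matrix.mul_apply, kr, Pi.mul_apply, ← Finset.prod_mul_distrib]
  rw [Finset.prod_univ_sum, Fintype.piFinset_univ]

theorem kr_one : kr (1 : Fin N → Matrix (Fin m) (Fin m) R) = 1 := by
  ext f g
  simp only [kr, Pi.one_apply, Matrix.one_apply]
  by_cases h : f = g
  · simp [h]
  · obtain ⟨t, ht⟩ := Function.ne_iff.1 h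
    rw [if_neg h]
    exact Finset.prod_eq_zero (Finset.mem_univ t) (by simp [ht])

theorem kr_map {R' : Type*} [CommRing R'] (φ : R →+* R') (c : Fin N → Matrix (Fin m) (Fin m) R) :
    (kr c).map φ = kr (fun t => (c t).map φ) := by
  ext f g
  simp [kr]

theorem kr_update_apply (c : Fin N → Matrix (Fin m) (Fin m) R) (k : Fin N) (a) (f g) :
    kr (Function.update c k a) f g = a (f k) (g k) * ∏ t ∈ Finset.univ.erase k, c t (f t) (g t) := by
  rw [kr, ← Finset.mul_prod_erase _ _ (Finset.mem_univ k)]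
  congr 1
  · simp
  · refine Finset.prod_congr rfl fun t ht => ?_
    rw [Function.update_of_ne (Finset.ne_of_mem_erase ht)]

def Dl : Matrix (Fin m) (Fin m) R →ₗ[R] Matrix (Fin N → Fin m) (Fin N → Fin m) R where
  toFun a := ∑ k : Fin N, kr (Pi.mulSingle k a)
  map_add' a b := by
    rw [← Finset.sum_add_distrib]
    refine Finset.sum_congr rfl fun k _ => ?_
    ext f g
    simp [Pi.mulSingle, kr_update_apply, add_mul]
  map_smul' r a := by
    rw [Finset.smul_sum]
    refine Finset.sum_congr rfl fun k _ => ?_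
    ext f g
    simp [Pi.mulSingle, kr_update_apply, mul_assoc]

theorem Dl_apply (a : Matrix (Fin m) (Fin m) R) :
    Dl (N := N) a = ∑ k : Fin N, kr (Pi.mulSingle k a) := rfl

def xk (k : Fin N) (a : Matrix (Fin m) (Fin m) R) :
    Matrix (Fin N → Fin m) (Fin N → Fin m) R := kr (Pi.mulSingle k a)

theorem xk_mul (k : Fin N) (a b : Matrix (Fin m) (Fin m) R) : xk k a * xk k b = xk k (a * b) := by
  rw [xk, xk, kr_mul, ← Pi.mulSingle_mul, xk]

theorem xk_comm {k l : Fin N} (h : k ≠ l) (a b : Matrix (Fin m) (Fin m) R) :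
    xk k a * xk l b = xk l b * xk k a := by
  rw [xk, xk, kr_mul, kr_mul]
  congr 1
  funext t
  by_cases h1 : t = k
  · subst h1; simp [Pi.mulSingle_eq_of_ne h]
  · simp [Pi.mulSingle_eq_of_ne h1]

theorem Dl_lie (a b : Matrix (Fin m) (Fin m) R) :
    Dl (N := N) (a * b - b * a) = Dl a * Dl b - Dl b * Dl a := by
  have hD : ∀ a : Matrix (Fin m) (Fin m) R, Dl (N := N) a = ∑ k, xk k a := fun _ => rfl
  rw [map_sub, sub_eq_sub_iff_add_eq_add]
  simp only [hD, Finset.sum_mul_sum]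
  have hcomm : ∑ x : Fin N, ∑ y : Fin N, xk x b * xk y a =
      ∑ y : Fin N, ∑ x : Fin N, xk x b * xk y a := Finset.sum_comm
  rw [hcomm, ← Finset.sum_add_distrib, ← Finset.sum_add_distrib]
  refine Finset.sum_congr rfl fun k _ => ?_
  rw [← Finset.add_sum_erase _ (fun j => xk j b * xk k a) (Finset.mem_univ k),
    ← Finset.add_sum_erase _ (fun j => xk k a * xk j b) (Finset.mem_univ k)]
  have : ∑ x ∈ Finset.univ.erase k, xk k a * xk x b =
    ∑ x ∈ Finset.univ.erase k, xk x b * xk k a :=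
    Finset.sum_congr rfl fun j hj => xk_comm (Finset.ne_of_mem_erase hj).symm a b
  rw [this, xk_mul, xk_mul]
  abel

open Classical in
def TT {r : ℕ} (c : Fin r → Matrix (Fin m) (Fin m) R) :
    Matrix (Fin N → Fin m) (Fin N → Fin m) R :=
  ∑ ι : Fin r → Fin N, if Function.Injective ι then kr (Function.extend ι c 1) else 0

theorem TT_zero (c : Fin 0 → Matrix (Fin m) (Fin m) R) : TT (N := N) c = 1 := by
  rw [TT, Fintype.sum_unique, if_pos (Function.injective_of_subsingleton _), ← kr_one]
  congr 1
  funext t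
  rw [Function.extend_apply' _ _ _ (by rintro ⟨a, _⟩; exact a.elim0)]

open Classical in
theorem TT_succ {r : ℕ} (a : Matrix (Fin m) (Fin m) R) (c : Fin r → Matrix (Fin m) (Fin m) R) :
    Dl (N := N) a * TT c = TT (Fin.cons a c : Fin (r+1) → _) +
      ∑ s, TT (Function.update c s (a * c s)) := by
  simp only [TT, Dl_apply]
  rw [Finset.mul_sum, Finset.sum_comm, ← (Fin.consEquiv (fun _ => Fin N)).sum_comp, Fintype.sum_prod_type_right,
    ← Finset.sum_add_distrib]
  refine Finset.sum_congr rfl fun ι _ => ?_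
  have hce : ∀ k : Fin N, (Fin.consEquiv (fun _ => Fin N)) (k, ι) = (Fin.cons k ι : Fin (r+1) → Fin N) :=
    fun _ => rfl
  simp only [hce, Fin.cons_injective_iff]
  by_cases hι : Function.Injective ι
  swap
  · simp [hι]
  simp only [hι, and_true, if_true, Finset.sum_mul, kr_mul]
  rw [← Finset.sum_filter, ← Finset.sum_filter_not_add_sum_filter Finset.univ (fun k => k ∈ Set.range ι)]
  congr 1
  · refine Finset.sum_congr rfl fun k hk => ?_
    have hk : k ∉ Set.range ι := by simpa using hk
    congr 1
    funext t
    by_cases htk : t = k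
    · subst htk
      have h1 : Function.extend (Fin.cons t ι : Fin (r+1) → Fin N) (Fin.cons a c : Fin (r+1) → _) 1
          ((Fin.cons t ι : Fin (r+1) → Fin N) 0) = a := by
        rw [Function.Injective.extend_apply]
        · rfl
        · exact Fin.cons_injective_iff.2 ⟨hk, hι⟩
      rw [Fin.cons_zero] at h1
      rw [h1, Pi.mul_apply, Function.extend_apply' _ _ _ hk]
      simp
    · rw [Pi.mul_apply, Pi.mulSingle_eq_of_ne htk, one_mul]
      by_cases hr : t ∈ Set.range ι
      · obtain ⟨s, rfl⟩ := hr
        have h1 : Function.extend (Fin.cons k ι : Fin (r+1) → Fin N) (Fin.cons a c : Fin (r+1) → _) 1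
          ((Fin.cons k ι : Fin (r+1) → Fin N) s.succ) = c s := by
          rw [Function.Injective.extend_apply]
          · rfl
          · exact Fin.cons_injective_iff.2 ⟨hk, hι⟩
        rw [Fin.cons_succ] at h1
        rw [h1, hι.extend_apply]
      · rw [Function.extend_apply' _ _ _ hr, Function.extend_apply']
        rintro ⟨s, hs⟩
        induction s using Fin.cases with
        | zero => exact htk (by simpa using hs.symm)
        | succ s => exact hr ⟨s, by simpa using hs⟩
  · have : (Finset.univ.filter (fun k => k ∈ Set.range ι)) = Finset.univ.image ι := by
      ext; simp
    rw [this, Finset.sum_image (fun _ _ _ _ h => hι h)]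
    refine Finset.sum_congr rfl fun s _ => ?_
    congr 1
    funext t
    rw [Pi.mul_apply]
    by_cases hr : t ∈ Set.range ι
    · obtain ⟨s', rfl⟩ := hr
      rw [hι.extend_apply, hι.extend_apply]
      by_cases hs : s' = s
      · subst hs; simp
      · rw [Pi.mulSingle_eq_of_ne (fun h => hs (hι h)), one_mul, Function.update_of_ne hs]
    · rw [Function.extend_apply' _ _ _ hr, Function.extend_apply' _ _ _ hr, Pi.mulSingle_eq_of_ne]
      · simp
      · rintro rfl; exact hr ⟨s, rfl⟩

theorem TT_mem (S : Subalgebra R (Matrix (Fin N → Fin m) (Fin N → Fin m) R))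
    (hS : ∀ a, Dl a ∈ S) (r : ℕ) : ∀ c : Fin r → Matrix (Fin m) (Fin m) R, TT c ∈ S := by
  induction r with
  | zero => intro c; rw [TT_zero]; exact S.one_mem
  | succ r ih =>
    intro c
    have := TT_succ (N := N) (c 0) (Fin.tail c)
    rw [Fin.cons_self_tail] at this
    rw [← sub_eq_iff_eq_add] at this
    rw [← this]
    exact S.sub_mem (S.mul_mem (hS _) (ih _)) (S.sum_mem fun s _ => ih _)

open Classical in
theorem TT_full (f g : Fin N → Fin m) :
    TT (N := N) (fun t : Fin N => Matrix.single (f t) (g t) (1 : R)) =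
      ∑ σ : Equiv.Perm (Fin N), Matrix.single (f ∘ σ) (g ∘ σ) 1 := by
  rw [TT, ← Finset.sum_filter]
  refine (Finset.sum_bij (fun (σ : Equiv.Perm (Fin N)) _ => ((σ⁻¹ : Equiv.Perm (Fin N)) : Fin N → Fin N))
    ?_ ?_ ?_ ?_).symm
  · intro σ _; simp [Equiv.injective]
  · intro σ _ τ _ h
    exact inv_injective (Equiv.ext (congrFun h))
  · intro ι hι
    have hι : Function.Injective ι := by simpa using hι
    refine ⟨(Equiv.ofBijective ι (Finite.injective_iff_bijective.1 hι))⁻¹, Finset.mem_univ _, ?_⟩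
    simp
  · intro σ _
    ext f' g'
    have : ∀ t, Function.extend (⇑(σ⁻¹ : Equiv.Perm (Fin N))) (fun t : Fin N => Matrix.single (f t) (g t) (1 : R)) 1 t
      = Matrix.single (f (σ t)) (g (σ t)) 1 := by
      intro t
      obtain ⟨s, rfl⟩ := (σ⁻¹).surjective t
      rw [(σ⁻¹).injective.extend_apply]
      simp
    simp only [kr, this, Matrix.single_apply]
    by_cases h : f ∘ σ = f' ∧ g ∘ σ = g'
    · obtain ⟨rfl, rfl⟩ := h
      simp
    · rw [if_neg h]
      symm
      have : ∃ t, ¬ (f (σ t) = f' t ∧ g (σ t) = g' t) := by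
        by_contra hc
        push Not at hc
        exact h ⟨funext fun t => (hc t).1, funext fun t => (hc t).2⟩
      obtain ⟨t, ht⟩ := this
      exact Finset.prod_eq_zero (Finset.mem_univ t) (if_neg ht)

end kr

/-- Invariant matrices over `ℚ` lie in any subalgebra containing all `Dl a`. -/
theorem inv_mem {m N : ℕ} (S : Subalgebra ℚ (Matrix (Fin N → Fin m) (Fin N → Fin m) ℚ))
    (hS : ∀ a, Dl a ∈ S) (Y : Matrix (Fin N → Fin m) (Fin N → Fin m) ℚ)
    (hY : ∀ (σ : Equiv.Perm (Fin N)) f g, Y (f ∘ σ) (g ∘ σ) = Y f g) : Y ∈ S := by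
  have key : (Fintype.card (Equiv.Perm (Fin N)) : ℚ) • Y =
      ∑ f, ∑ g, Y f g • TT (N := N) (fun t : Fin N => Matrix.single (f t) (g t) (1 : ℚ)) := by
    simp only [TT_full, Finset.smul_sum]
    have h1 : ∀ σ : Equiv.Perm (Fin N),
      ∑ f, ∑ g, Y f g • Matrix.single (f ∘ σ) (g ∘ σ) (1 : ℚ) = Y := by
      intro σ
      conv_rhs => rw [Matrix.matrix_eq_sum_single Y]
      rw [← (Equiv.arrowCongr σ (Equiv.refl (Fin m))).sum_comp]
      refine Finset.sum_congr rfl fun f _ => ?_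
      rw [← (Equiv.arrowCongr σ (Equiv.refl (Fin m))).sum_comp]
      refine Finset.sum_congr rfl fun g _ => ?_
      have e : ∀ f : Fin N → Fin m, (Equiv.arrowCongr σ (Equiv.refl (Fin m))) f ∘ σ = f := by
        intro f; funext t; simp [Equiv.arrowCongr]
      rw [← hY σ, e, e]
      simp
    calc _ = ∑ σ : Equiv.Perm (Fin N), ∑ f, ∑ g, Y f g • Matrix.single (f ∘ σ) (g ∘ σ) (1 : ℚ) := by
          simp only [h1]
          simp [Nat.cast_smul_eq_nsmul]
      _ = _ := by
          rw [Finset.sum_comm]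
          refine Finset.sum_congr rfl fun f _ => ?_
          rw [Finset.sum_comm]
  have h2 : (Fintype.card (Equiv.Perm (Fin N)) : ℚ) ≠ 0 := by
    exact_mod_cast Fintype.card_ne_zero
  have : Y = (Fintype.card (Equiv.Perm (Fin N)) : ℚ)⁻¹ • ∑ f, ∑ g, Y f g • TT (N := N) (fun t : Fin N => Matrix.single (f t) (g t) (1 : ℚ)) := by
    rw [← key, smul_smul, inv_mul_cancel₀ h2, one_smul]
  rw [this]
  exact S.smul_mem (S.sum_mem fun f _ => S.sum_mem fun g _ => S.smul_mem (TT_mem S hS _ _) _) _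

theorem dc {n k : Type*} [Fintype n] [DecidableEq n] [Field k]
    (hk : ∀ s : n × n → k, ∑ i, s i * s i = 0 → s = 0)
    (S : Subalgebra k (Matrix n n k)) (hS : ∀ a ∈ S, aᵀ ∈ S) (X : Matrix n n k)
    (hX : ∀ Y, (∀ a ∈ S, a * Y = Y * a) → X * Y = Y * X) : X ∈ S := by
  let B : LinearMap.BilinForm k (Matrix n n k) :=
    LinearMap.mk₂ k (fun X Y => Matrix.trace (Xᵀ * Y)) (by simp [add_mul]) (by simp)
      (by simp [mul_add]) (by simp)
  have hB : ∀ X Y, B X Y = Matrix.trace (Xᵀ * Y) := fun _ _ => rfl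
  have hsymm : ∀ X Y, B X Y = B Y X := by
    intro X Y
    rw [hB, hB, ← Matrix.trace_transpose, Matrix.transpose_mul, Matrix.transpose_transpose]
  have hani : ∀ X, B X X = 0 → X = 0 := by
    intro X h
    have := hk (fun p => X p.1 p.2) (by
      rw [← h, hB, Fintype.sum_prod_type_right]
      simp [Matrix.trace, Matrix.mul_apply])
    ext i j
    exact congrFun this (i, j)
  let W := Subalgebra.toSubmodule S
  have hc : IsCompl W (B.orthogonal W) := by
    apply LinearMap.BilinForm.isCompl_orthogonal_of_restrict_nondegenerate
    · intro X Y h; rw [hsymm, h]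
    · constructor
      · intro x hx
        exact Subtype.ext (hani _ (hx x))
      · intro x hx
        exact Subtype.ext (hani _ (hx x))
  obtain ⟨P, hP1, hP2⟩ : ∃ P : Matrix n n k →ₗ[k] Matrix n n k, (∀ x ∈ W, P x = x) ∧
      (∀ x ∈ B.orthogonal W, P x = 0) := by
    refine ⟨W.subtype ∘ₗ W.projectionOnto _ hc, ?_, ?_⟩
    · intro x hx
      simpa using congrArg Subtype.val (Submodule.projectionOnto_apply_left hc ⟨x, hx⟩)
    · intro x hx
      simpa using hx
  have hdec : ∀ Y, ∃ s ∈ W, ∃ o ∈ B.orthogonal W, s + o = Y := by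
    intro Y
    have : Y ∈ W ⊔ B.orthogonal W := by rw [hc.sup_eq_top]; trivial
    exact Submodule.mem_sup.1 this
  have horth : ∀ a ∈ S, ∀ o ∈ B.orthogonal W, a * o ∈ B.orthogonal W := by
    intro a ha o ho
    rw [LinearMap.BilinForm.mem_orthogonal_iff] at ho ⊢
    intro s hs
    have := ho (aᵀ * s) (S.mul_mem (hS a ha) hs)
    simpa [hB, Matrix.mul_assoc] using this
  have hPW : ∀ Y, P Y ∈ W := by
    intro Y
    obtain ⟨s, hs, o, ho, rfl⟩ := hdec Y
    rw [map_add, hP1 s hs, hP2 o ho, add_zero]; exact hs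
  have hPlin : ∀ a ∈ S, ∀ Y, P (a * Y) = a * P Y := by
    intro a ha Y
    obtain ⟨s, hs, o, ho, rfl⟩ := hdec Y
    rw [mul_add, map_add, map_add, hP1 s hs, hP2 o ho, hP2 _ (horth a ha o ho), hP1 _ (S.mul_mem ha hs)]
    simp
  -- blocks
  let Q : n → n → Matrix n n k := fun j l => Matrix.of fun i i' => P (Matrix.single i' l 1) i j
  have hQ : ∀ Y i j, P Y i j = ∑ l, (Q j l * Y) i l := by
    intro Y i j
    conv_lhs => rw [Matrix.matrix_eq_sum_single Y]
    simp only [map_sum, Matrix.sum_apply, Matrix.mul_apply]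
    rw [Finset.sum_comm]
    refine Finset.sum_congr rfl fun l _ => Finset.sum_congr rfl fun i' _ => ?_
    have : Matrix.single i' l (Y i' l) = Y i' l • Matrix.single i' l 1 := by simp
    rw [this, map_smul]
    simp [Q, mul_comm]
  have hQc : ∀ j l, ∀ a ∈ S, a * Q j l = Q j l * a := by
    intro j l a ha
    ext i i'
    have h1 := congrFun (congrFun (hPlin a ha (Matrix.single i' l 1)) i) j
    rw [hQ] at h1
    have h2 : ∀ l', (Q j l' * (a * Matrix.single i' l (1 : k)) : Matrix n n k) i l' = if l' = l then (Q j l * a) i i' else 0 := by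
      intro l'
      rw [← Matrix.mul_assoc]
      split_ifs with h
      · subst h; simp
      · rw [Matrix.mul_single_apply_of_ne _ _ _ _ _ h]
    simp only [h2, Finset.sum_ite_eq', Finset.mem_univ, if_true] at h1
    rw [h1]
    simp [Matrix.mul_apply, Q]
  have hXP : P (X * 1) = X * P 1 := by
    ext i j
    rw [hQ]
    have : ∀ l, Q j l * (X * 1) = X * (Q j l * 1) := by
      intro l
      rw [Matrix.mul_one, Matrix.mul_one, hX _ (hQc j l)]
    simp only [this]
    simp only [Matrix.mul_apply (M := X), hQ]
    rw [Finset.sum_comm]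
    simp only [Finset.mul_sum]
  rw [hP1 1 S.one_mem, Matrix.mul_one] at hXP
  rw [← hXP]
  exact hPW X

end SW
namespace SW
open Matrix

theorem q_ne : q ≠ 0 := RatFunc.X_ne_zero

section rop
variable {m N : ℕ}

theorem Rop0_eq (i : ℕ) (h : i + 1 < N) (a b : Fin N) (ha : (a : ℕ) = i) (hb : (b : ℕ) = i + 1)
    (f g : Fin N → Fin m) :
    Rop0 m N i h f g = if g a = g b then (if f = g then q⁻¹ else 0)
      else (if f = g ∘ Equiv.swap a b then 1 else 0) + (if g b < g a ∧ f = g then q⁻¹ - q else 0) := by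
  have ea : (⟨i, Nat.lt_of_succ_lt h⟩ : Fin N) = a := Fin.ext ha.symm
  have eb : (⟨i + 1, h⟩ : Fin N) = b := Fin.ext hb.symm
  have hab : a ≠ b := by intro h; rw [h] at ha; omega
  rw [Rop0, ea, eb]
  have hprod : (∏ t : Fin N, (if (t : ℕ) = i ∨ (t : ℕ) = i + 1 then (1 : K)
        else if f t = g t then 1 else 0)) = if ∀ t, t ≠ a → t ≠ b → f t = g t then 1 else 0 := by
    have hc : ∀ t : Fin N, ((t : ℕ) = i ∨ (t : ℕ) = i + 1) ↔ (t = a ∨ t = b) := by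
      intro t; rw [Fin.ext_iff, Fin.ext_iff, ha, hb]
    split_ifs with hh
    · refine Finset.prod_eq_one fun t _ => ?_
      split_ifs with h1 h2
      · rfl
      · rfl
      · rw [hc] at h1; push Not at h1; exact absurd (hh t h1.1 h1.2) h2
    · push Not at hh
      obtain ⟨t, h1, h2, h3⟩ := hh
      refine Finset.prod_eq_zero (Finset.mem_univ t) ?_
      rw [if_neg (by rw [hc]; tauto), if_neg h3]
  rw [hprod]
  have e1 : f = g ↔ (f a, f b) = (g a, g b) ∧ ∀ t, t ≠ a → t ≠ b → f t = g t := by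
    constructor
    · rintro rfl; simp
    · rintro ⟨h1, h2⟩
      simp only [Prod.mk.injEq] at h1
      funext t
      by_cases hta : t = a
      · rw [hta, h1.1]
      by_cases htb : t = b
      · rw [htb, h1.2]
      exact h2 t hta htb
  have e2 : f = g ∘ Equiv.swap a b ↔ (f a = g b ∧ f b = g a) ∧ ∀ t, t ≠ a → t ≠ b → f t = g t := by
    constructor
    · rintro rfl
      simp only [Function.comp_apply, Equiv.swap_apply_left, Equiv.swap_apply_right, true_and, and_self]
      intro t h1 h2; rw [Equiv.swap_apply_of_ne_of_ne h1 h2]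
    · rintro ⟨h1, h2⟩
      funext t
      by_cases hta : t = a
      · simp [hta, h1.1]
      by_cases htb : t = b
      · simp [htb, h1.2]
      simp [Equiv.swap_apply_of_ne_of_ne hta htb, h2 t hta htb]
  simp only [e1, e2, R0mat]
  by_cases hr : ∀ t, t ≠ a → t ≠ b → f t = g t
  · rw [if_pos hr, mul_one]
    simp only [and_iff_left hr]
  · rw [if_neg hr, mul_zero]
    simp only [hr, and_false, if_false, add_zero, ite_self]

theorem comp_swap_eq (a b : Fin N) (f g : Fin N → Fin m) :
    f = g ∘ Equiv.swap a b ↔ g = f ∘ Equiv.swap a b := by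
  constructor <;> (rintro rfl; funext t; simp)

theorem Rop0_symm (i : ℕ) (h : i + 1 < N) : (Rop0 m N i h)ᵀ = Rop0 m N i h := by
  ext f g
  rw [Matrix.transpose_apply, Rop0_eq i h ⟨i, by omega⟩ ⟨i+1, h⟩ rfl rfl,
    Rop0_eq i h ⟨i, by omega⟩ ⟨i+1, h⟩ rfl rfl]
  set a : Fin N := ⟨i, by omega⟩
  set b : Fin N := ⟨i+1, h⟩
  by_cases hfg : f = g
  · subst hfg; rfl
  have hgf : ¬ g = f := fun h => hfg h.symm
  simp only [hfg, hgf, and_false, if_false, add_zero]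
  simp only [comp_swap_eq a b g f]
  by_cases h1 : f = g ∘ Equiv.swap a b
  · have : f a = f b ↔ g a = g b := by subst h1; simp [eq_comm]
    simp only [this]
  · simp [h1]

def Phi (X : Matrix (Fin N → Fin m) (Fin N → Fin m) K) (a b : Fin N) (f g : Fin N → Fin m) : K :=
  if g a = g b then q⁻¹ * X f g else X f (g ∘ Equiv.swap a b) + if g b < g a then (q⁻¹ - q) * X f g else 0

theorem mul_Rop0 (X : Matrix (Fin N → Fin m) (Fin N → Fin m) K)
    (i : ℕ) (h : i + 1 < N) (a b : Fin N) (ha : (a : ℕ) = i) (hb : (b : ℕ) = i + 1)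
    (f g : Fin N → Fin m) : (X * Rop0 m N i h) f g = Phi X a b f g := by
  rw [Matrix.mul_apply, Phi]
  simp only [Rop0_eq i h a b ha hb]
  by_cases h1 : g a = g b
  · simp [h1, mul_comm]
  · simp only [h1, if_false, mul_add, Finset.sum_add_distrib]
    by_cases h2 : g b < g a <;> simp [h2, mul_comm]

theorem Rop0_mul (X : Matrix (Fin N → Fin m) (Fin N → Fin m) K)
    (i : ℕ) (h : i + 1 < N) (a b : Fin N) (ha : (a : ℕ) = i) (hb : (b : ℕ) = i + 1)
    (f g : Fin N → Fin m) : (Rop0 m N i h * X) f g = Phi Xᵀ a b g f := by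
  rw [← mul_Rop0 Xᵀ i h a b ha hb, ← Rop0_symm, ← Matrix.transpose_mul, Matrix.transpose_apply,
    Rop0_symm]

theorem comm_iff (X : Matrix (Fin N → Fin m) (Fin N → Fin m) K)
    (i : ℕ) (h : i + 1 < N) (a b : Fin N) (ha : (a : ℕ) = i) (hb : (b : ℕ) = i + 1) :
    Rop0 m N i h * X = X * Rop0 m N i h ↔ ∀ f g, Phi Xᵀ a b g f = Phi X a b f g := by
  rw [← Matrix.ext_iff]
  simp only [mul_Rop0 X i h a b ha hb, Rop0_mul X i h a b ha hb]

def restp (c : Fin N → Matrix (Fin m) (Fin m) K) (a b : Fin N) (f g : Fin N → Fin m) : K :=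
  ∏ t ∈ (Finset.univ.erase a).erase b, c t (f t) (g t)

theorem kr_split (c : Fin N → Matrix (Fin m) (Fin m) K) {a b : Fin N} (hab : a ≠ b) (f g) :
    kr c f g = c a (f a) (g a) * c b (f b) (g b) * restp c a b f g := by
  rw [kr, ← Finset.mul_prod_erase _ _ (Finset.mem_univ a),
    ← Finset.mul_prod_erase (Finset.univ.erase a) _ (a := b) (by simp [hab.symm]), mul_assoc]
  rfl

theorem restp_congr (c c' : Fin N → Matrix (Fin m) (Fin m) K) (a b : Fin N) (f g f' g' : Fin N → Fin m)
    (hc : ∀ t, t ≠ a → t ≠ b → c t = c' t)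
    (hf : ∀ t, t ≠ a → t ≠ b → f t = f' t) (hg : ∀ t, t ≠ a → t ≠ b → g t = g' t) :
    restp c a b f g = restp c' a b f' g' := by
  refine Finset.prod_congr rfl fun t ht => ?_
  simp only [Finset.mem_erase, Finset.mem_univ, and_true] at ht
  rw [hc t ht.2 ht.1, hf t ht.2 ht.1, hg t ht.2 ht.1]

theorem comm_pair (X : Matrix (Fin N → Fin m) (Fin N → Fin m) K)
    (i : ℕ) (h : i + 1 < N) (a b : Fin N) (ha : (a : ℕ) = i) (hb : (b : ℕ) = i + 1)
    (c : Fin N → Matrix (Fin m) (Fin m) K) (T : Fin m → Fin m → Fin m → Fin m → K)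
    (hX : ∀ f g, X f g = T (f a) (f b) (g a) (g b) * restp c a b f g)
    (hT : ∀ x y u v, (if x = y then q⁻¹ * T x y u v else T y x u v + if y < x then (q⁻¹ - q) * T x y u v else 0)
      = (if u = v then q⁻¹ * T x y u v else T x y v u + if v < u then (q⁻¹ - q) * T x y u v else 0)) :
    Rop0 m N i h * X = X * Rop0 m N i h := by
  rw [comm_iff X i h a b ha hb]
  intro f g
  have hT' := hT (f a) (f b) (g a) (g b)
  have e : ∀ f : Fin N → Fin m, ∀ t, t ≠ a → t ≠ b → (f ∘ Equiv.swap a b) t = f t := by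
    intro f t h1 h2; simp [Equiv.swap_apply_of_ne_of_ne h1 h2]
  simp only [Phi, Matrix.transpose_apply, hX]
  rw [restp_congr c c a b (f ∘ Equiv.swap a b) g f g (fun _ _ _ => rfl) (e f) (fun _ _ _ => rfl),
    restp_congr c c a b f (g ∘ Equiv.swap a b) f g (fun _ _ _ => rfl) (fun _ _ _ => rfl) (e g)]
  simp only [Function.comp_apply, Equiv.swap_apply_left, Equiv.swap_apply_right]
  have := congrArg (· * restp c a b f g) hT'
  simp only [ite_mul, add_mul, zero_mul, mul_assoc] at this
  simpa only [mul_assoc] using this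

theorem comm_diag (c : Fin N → Matrix (Fin m) (Fin m) K)
    (i : ℕ) (h : i + 1 < N) (a b : Fin N) (ha : (a : ℕ) = i) (hb : (b : ℕ) = i + 1)
    (d : Fin m → K) (hca : c a = Matrix.diagonal d) (hcb : c b = Matrix.diagonal d) :
    Rop0 m N i h * kr c = kr c * Rop0 m N i h := by
  have hab : a ≠ b := by intro h; rw [h] at ha; omega
  refine comm_pair _ i h a b ha hb c
    (fun x y u v => Matrix.diagonal d x u * Matrix.diagonal d y v) ?_ ?_
  · intro f g; rw [kr_split c hab, hca, hcb]
  · intro x y u v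
    simp only [Matrix.diagonal_apply]
    grind

theorem place_eq (B A C : Matrix (Fin m) (Fin m) K) (k : Fin N) :
    place m N B A C k = kr (fun t => if t < k then B else if t = k then A else C) := by
  ext f g
  rw [place, kr]
  refine Finset.prod_congr rfl fun t _ => ?_
  split_ifs <;> rfl

theorem comm_sum (B A C : Matrix (Fin m) (Fin m) K) (dB dC : Fin m → K)
    (hB : B = Matrix.diagonal dB) (hC : C = Matrix.diagonal dC)
    (hT : ∀ x y u v, (if x = y then q⁻¹ * (A x u * C y v + B x u * A y v)
        else (A y u * C x v + B y u * A x v) + if y < x then (q⁻¹ - q) * (A x u * C y v + B x u * A y v) else 0)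
      = (if u = v then q⁻¹ * (A x u * C y v + B x u * A y v)
        else (A x v * C y u + B x v * A y u) + if v < u then (q⁻¹ - q) * (A x u * C y v + B x u * A y v) else 0))
    (i : ℕ) (h : i + 1 < N) :
    Rop0 m N i h * (∑ k : Fin N, place m N B A C k) = (∑ k : Fin N, place m N B A C k) * Rop0 m N i h := by
  obtain ⟨a, ha⟩ : ∃ a : Fin N, (a : ℕ) = i := ⟨⟨i, by omega⟩, rfl⟩
  obtain ⟨b, hb⟩ : ∃ b : Fin N, (b : ℕ) = i + 1 := ⟨⟨i + 1, by omega⟩, rfl⟩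
  have hab : a ≠ b := by intro h; rw [h] at ha; omega
  rw [← Finset.add_sum_erase _ _ (Finset.mem_univ a),
    ← Finset.add_sum_erase (Finset.univ.erase a) _ (a := b) (by simp [hab.symm]), ← add_assoc,
    mul_add, add_mul]
  congr 1
  · simp only [place_eq]
    refine comm_pair _ i h a b ha hb (fun t => if t < a then B else if t = a then A else C)
      (fun x y u v => A x u * C y v + B x u * A y v) ?_ hT
    intro f g
    rw [Matrix.add_apply, kr_split _ hab, kr_split _ hab,
      restp_congr (fun t => if t < b then B else if t = b then A else C)
        (fun t => if t < a then B else if t = a then A else C) a b f g f g ?_ (fun _ _ _ => rfl) (fun _ _ _ => rfl)]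
    · have h1 : a < b := by rw [Fin.lt_def]; omega
      have h2 : ¬ b < a := by rw [Fin.lt_def]; omega
      simp only [h1, h2, lt_irrefl, if_true, if_false, hab.symm]
      ring
    · intro t h1 h2
      have : t < b ↔ t < a := by
        rw [Fin.lt_def, Fin.lt_def]
        have := Fin.val_ne_of_ne h1
        omega
      simp only [this, h1, h2, if_false]
  · rw [Finset.mul_sum, Finset.sum_mul]
    refine Finset.sum_congr rfl fun k hk => ?_
    simp only [Finset.mem_erase, Finset.mem_univ, and_true] at hk
    have k1 := Fin.val_ne_of_ne hk.1
    have k2 := Fin.val_ne_of_ne hk.2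
    rw [place_eq]
    by_cases hka : a < k
    · have : b < k := by rw [Fin.lt_def] at *; omega
      exact comm_diag _ i h a b ha hb dB (by simp [hka, hB]) (by simp [this, hB])
    · have : ¬ b < k := by rw [Fin.lt_def] at *; omega
      exact comm_diag _ i h a b ha hb dC (by simp [hka, hk.2.symm, hC]) (by simp [this, hk.1.symm, hC])

theorem comm_E (j i : ℕ) (h : i + 1 < N) :
    Rop0 m N i h * DeltaEN m N j = DeltaEN m N j * Rop0 m N i h := by
  refine comm_sum _ _ _ _ _ Matrix.diagonal_one.symm rfl ?_ i h
  intro x y u v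
  have := mul_inv_cancel₀ q_ne
  simp only [Emat, Matrix.diagonal_apply, Matrix.one_apply, Fin.ext_iff, Fin.lt_def]
  generalize (x : ℕ) = x at *
  generalize (y : ℕ) = y at *
  generalize (u : ℕ) = u at *
  generalize (v : ℕ) = v at *
  generalize q⁻¹ = p at *
  generalize q = q at *
  by_cases hx : x = j <;> by_cases hy : y = j <;>
    by_cases hu : u = j + 1 <;> by_cases hv : v = j + 1
  all_goals (try subst hx)
  all_goals (try subst hy)
  all_goals (try subst hu)
  all_goals (try subst hv)
  all_goals simp [*]
  all_goals grind

theorem comm_F (j i : ℕ) (h : i + 1 < N) :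
    Rop0 m N i h * DeltaFN m N j = DeltaFN m N j * Rop0 m N i h := by
  refine comm_sum _ _ _ _ _ rfl Matrix.diagonal_one.symm ?_ i h
  intro x y u v
  have := mul_inv_cancel₀ q_ne
  simp only [Fmat, Matrix.diagonal_apply, Matrix.one_apply, Fin.ext_iff, Fin.lt_def]
  generalize (x : ℕ) = x at *
  generalize (y : ℕ) = y at *
  generalize (u : ℕ) = u at *
  generalize (v : ℕ) = v at *
  generalize q⁻¹ = p at *
  generalize q = q at *
  by_cases hx : x = j + 1 <;> by_cases hy : y = j + 1 <;>
    by_cases hu : u = j <;> by_cases hv : v = j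
  all_goals (try subst hx)
  all_goals (try subst hy)
  all_goals (try subst hu)
  all_goals (try subst hv)
  all_goals simp [*]
  all_goals grind

end rop
end SW
namespace SW
open Matrix Polynomial

theorem formally_real {ι : Type*} [Fintype ι] (s : ι → K) (h : ∑ i, s i * s i = 0) : s = 0 := by
  obtain ⟨b, hb⟩ := IsLocalization.exist_integer_multiples_of_finite (nonZeroDivisors ℚ[X]) s
  choose p hp using hb
  have hb0 : algebraMap ℚ[X] K b ≠ 0 := by
    intro h0
    exact nonZeroDivisors.ne_zero b.2 ((IsFractionRing.injective ℚ[X] K) (by rw [h0, map_zero]))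
  have hp' : ∀ i, algebraMap ℚ[X] K (p i) = algebraMap ℚ[X] K b * s i := by
    intro i; rw [hp i, Algebra.smul_def]
  have h1 : ∑ i, p i * p i = 0 := by
    apply IsFractionRing.injective ℚ[X] K
    rw [map_sum, map_zero]
    simp only [map_mul, hp']
    have : ∀ i, algebraMap ℚ[X] K b * s i * (algebraMap ℚ[X] K b * s i)
      = (algebraMap ℚ[X] K b * algebraMap ℚ[X] K b) * (s i * s i) := by intro i; ring
    simp only [this]
    rw [← Finset.mul_sum, h, mul_zero]
  have h2 : ∀ i, p i = 0 := by
    intro i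
    apply Polynomial.funext
    intro x
    have h3 := congrArg (Polynomial.eval x) h1
    rw [Polynomial.eval_finsetSum] at h3
    simp only [Polynomial.eval_mul, Polynomial.eval_zero] at h3
    rw [Finset.sum_eq_zero_iff_of_nonneg (fun i _ => mul_self_nonneg _)] at h3
    simpa using h3 i (Finset.mem_univ i)
  funext i
  have := hp' i
  rw [h2 i, map_zero] at this
  simpa [hb0] using this.symm

section spec
variable {m N : ℕ}

abbrev toK : ℚ[X] →+* K := algebraMap ℚ[X] K
abbrev ev : ℚ[X] →+* ℚ := Polynomial.evalRingHom 1

theorem toK_X : toK X = q := RatFunc.algebraMap_X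

theorem RX : (RatFunc.X : K) = q := rfl

theorem toK_inj : Function.Injective toK := IsFractionRing.injective ℚ[X] K

/-- The subalgebra of specialisations at `q = 1` of polynomial elements of `B`. -/
def SS (B : Subalgebra K (Matrix (Fin N → Fin m) (Fin N → Fin m) K)) :
    Subalgebra ℚ (Matrix (Fin N → Fin m) (Fin N → Fin m) ℚ) where
  carrier := {Y | ∃ P : Matrix (Fin N → Fin m) (Fin N → Fin m) ℚ[X],
    toK.mapMatrix P ∈ B ∧ ev.mapMatrix P = Y}
  mul_mem' := by
    rintro _ _ ⟨P, h1, rfl⟩ ⟨Q, h2, rfl⟩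
    exact ⟨P * Q, by rw [map_mul]; exact B.mul_mem h1 h2, map_mul _ _ _⟩
  add_mem' := by
    rintro _ _ ⟨P, h1, rfl⟩ ⟨Q, h2, rfl⟩
    exact ⟨P + Q, by rw [map_add]; exact B.add_mem h1 h2, map_add _ _ _⟩
  algebraMap_mem' r := by
    refine ⟨algebraMap ℚ[X] _ (C r), ?_, ?_⟩
    · have : toK.mapMatrix (algebraMap ℚ[X] (Matrix (Fin N → Fin m) (Fin N → Fin m) ℚ[X]) (C r)) =
        algebraMap K _ (toK (C r)) := by
        ext f g
        by_cases h : f = g <;> simp [Matrix.algebraMap_matrix_apply, h]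
      rw [this]
      exact B.algebraMap_mem _
    · ext f g
      by_cases h : f = g <;> simp [Matrix.algebraMap_matrix_apply, h]

theorem kr_smul {R : Type*} [CommRing R] (r : R) (c : Fin N → Matrix (Fin m) (Fin m) R) :
    kr (fun t => r • c t) = r ^ N • kr c := by
  ext f g
  simp [kr, Finset.prod_mul_distrib]

theorem SS_E (i i' : Fin m) (h : (i' : ℕ) = i + 1) :
    Dl (Matrix.single i i' 1) ∈ SS (N := N) (Algebra.adjoin K (QGGens m N)) := by
  refine ⟨∑ k : Fin N, kr (fun t => if t < k then (X : ℚ[X]) • 1 else if t = k then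
    (X : ℚ[X]) • Matrix.single i i' 1 else
      Matrix.diagonal (fun s => if s = i then 1 else if s = i' then X ^ 2 else X)), ?_, ?_⟩
  · have : toK.mapMatrix (∑ k : Fin N, kr (fun t => if t < k then (X : ℚ[X]) • 1 else if t = k then
        (X : ℚ[X]) • Matrix.single i i' 1 else
        Matrix.diagonal (fun s => if s = i then 1 else if s = i' then X ^ 2 else X))) =
        q ^ N • DeltaEN m N i := by
      rw [map_sum, DeltaEN, Finset.smul_sum]
      refine Finset.sum_congr rfl fun k _ => ?_
      rw [place_eq, ← kr_smul, RingHom.mapMatrix_apply, kr_map]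
      congr 1
      funext t
      split_ifs
      · ext x y
        simp only [Matrix.map_apply, Matrix.smul_apply, Matrix.one_apply]
        split_ifs <;> simp [RX]
      · ext x y
        have : ((x : ℕ) = i ∧ (y : ℕ) = i + 1) ↔ (i = x ∧ i' = y) := by
          simp only [Fin.ext_iff]; omega
        simp only [Matrix.map_apply, Matrix.smul_apply, Matrix.single_apply, Emat, Matrix.of_apply, this]
        split_ifs <;> simp [RX]
      · ext x y
        have e : (x : ℕ) = i ↔ x = i := by simp only [Fin.ext_iff]
        have e' : (x : ℕ) = i + 1 ↔ x = i' := by simp only [Fin.ext_iff]; omega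
        have := mul_inv_cancel₀ q_ne
        simp only [KmatInv, Matrix.map_apply, Matrix.diagonal_apply, Matrix.smul_apply, e, e', smul_eq_mul]
        split_ifs <;> simp [RX, this, pow_two]
    rw [this]
    exact (Algebra.adjoin K (QGGens m N)).smul_mem (Algebra.subset_adjoin (show _ ∈ QGGens m N from Or.inl ⟨i, by omega, Or.inl rfl⟩)) _
  · rw [map_sum, Dl_apply]
    refine Finset.sum_congr rfl fun k _ => ?_
    rw [RingHom.mapMatrix_apply, kr_map]
    congr 1
    funext t
    by_cases htk : t = k
    · subst htk
      ext x y
      simp [Matrix.single_apply, apply_ite]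
    · rw [Pi.mulSingle_eq_of_ne htk]
      ext x y
      simp only [htk, if_false]
      split_ifs
      · simp [Matrix.one_apply, apply_ite]
      · simp only [Matrix.map_apply, Matrix.diagonal_apply, Matrix.one_apply]
        split_ifs <;> simp

theorem SS_F (i i' : Fin m) (h : (i' : ℕ) = i + 1) :
    Dl (Matrix.single i' i 1) ∈ SS (N := N) (Algebra.adjoin K (QGGens m N)) := by
  refine ⟨∑ k : Fin N, kr (fun t => if t < k then 
      Matrix.diagonal (fun s => if s = i then X ^ 2 else if s = i' then 1 else X)
    else if t = k then (X : ℚ[X]) • Matrix.single i' i 1 else (X : ℚ[X]) • 1), ?_, ?_⟩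
  · have : toK.mapMatrix (∑ k : Fin N, kr (fun t => if t < k then 
      Matrix.diagonal (fun s => if s = i then X ^ 2 else if s = i' then 1 else X)
    else if t = k then (X : ℚ[X]) • Matrix.single i' i 1 else (X : ℚ[X]) • 1)) =
        q ^ N • DeltaFN m N i := by
      rw [map_sum, DeltaFN, Finset.smul_sum]
      refine Finset.sum_congr rfl fun k _ => ?_
      rw [place_eq, ← kr_smul, RingHom.mapMatrix_apply, kr_map]
      congr 1
      funext t
      split_ifs
      · ext x y
        have e : (x : ℕ) = i ↔ x = i := by simp only [Fin.ext_iff]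
        have e' : (x : ℕ) = i + 1 ↔ x = i' := by simp only [Fin.ext_iff]; omega
        have := mul_inv_cancel₀ q_ne
        simp only [Kmat, Matrix.map_apply, Matrix.diagonal_apply, Matrix.smul_apply, e, e', smul_eq_mul]
        split_ifs <;> simp [RX, this, pow_two]
      · ext x y
        have : ((x : ℕ) = i + 1 ∧ (y : ℕ) = i) ↔ (i' = x ∧ i = y) := by
          simp only [Fin.ext_iff]; omega
        simp only [Matrix.map_apply, Matrix.smul_apply, Matrix.single_apply, Fmat, Matrix.of_apply, this]
        split_ifs <;> simp [RX]
      · ext x y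
        simp only [Matrix.map_apply, Matrix.smul_apply, Matrix.one_apply]
        split_ifs <;> simp [RX]
    rw [this]
    exact (Algebra.adjoin K (QGGens m N)).smul_mem (Algebra.subset_adjoin (show _ ∈ QGGens m N from Or.inl ⟨i, by omega, Or.inr rfl⟩)) _
  · rw [map_sum, Dl_apply]
    refine Finset.sum_congr rfl fun k _ => ?_
    rw [RingHom.mapMatrix_apply, kr_map]
    congr 1
    funext t
    by_cases htk : t = k
    · subst htk
      ext x y
      simp [Matrix.single_apply, apply_ite]
    · rw [Pi.mulSingle_eq_of_ne htk]
      ext x y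
      simp only [htk, if_false]
      split_ifs
      · simp only [Matrix.map_apply, Matrix.diagonal_apply, Matrix.one_apply]
        split_ifs <;> simp
      · simp [Matrix.one_apply, apply_ite]

theorem kr_diag {R : Type*} [CommRing R] (d : Fin N → Fin m → R) :
    kr (fun t => Matrix.diagonal (d t)) = Matrix.diagonal (fun f => ∏ t, d t (f t)) := by
  ext f g
  by_cases h : f = g
  · subst h; simp [kr]
  · obtain ⟨t, ht⟩ := Function.ne_iff.1 h
    rw [Matrix.diagonal_apply_ne _ h]
    exact Finset.prod_eq_zero (Finset.mem_univ t) (Matrix.diagonal_apply_ne _ ht)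

def cnt (l : Fin m) (f : Fin N → Fin m) : ℕ := (Finset.univ.filter (fun t => f t = l)).card

theorem q_sub_one : q - 1 ≠ 0 := by
  intro h
  have h1 : toK (X - 1) = 0 := by rw [map_sub, toK_X, map_one, h]
  have h2 : (X - 1 : ℚ[X]) = 0 := toK_inj (by rw [h1, map_zero])
  exact Polynomial.X_sub_C_ne_zero (1 : ℚ) (by simpa using h2)

theorem SS_L (l : Fin m) :
    Dl (Matrix.single l l 1) ∈ SS (N := N) (Algebra.adjoin K (QGGens m N)) := by
  refine ⟨Matrix.diagonal (fun f => ∑ k ∈ Finset.range (cnt l f), X ^ k), ?_, ?_⟩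
  · have : toK.mapMatrix (Matrix.diagonal (fun f : Fin N → Fin m => ∑ k ∈ Finset.range (cnt l f), (X : ℚ[X]) ^ k))
        = (q - 1)⁻¹ • (kpow m N (Lmat m l) - 1) := by
      have h1 : kpow m N (Lmat m l) = Matrix.diagonal (fun f => q ^ (cnt l f)) := by
        have : kpow m N (Lmat m l) = kr (fun _ => Lmat m l) := rfl
        rw [this]
        simp only [Lmat]
        rw [kr_diag]
        congr 1
        funext f
        simp [Finset.prod_ite, cnt, Fin.ext_iff]
      rw [h1, RingHom.mapMatrix_apply, Matrix.diagonal_map (map_zero _), ← Matrix.diagonal_one,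
        Matrix.diagonal_sub, ← Matrix.diagonal_smul]
      congr 1
      funext f
      simp only [Function.comp_apply, Pi.smul_apply, map_sum, map_pow, toK_X, smul_eq_mul]
      rw [← mul_geom_sum, ← mul_assoc, inv_mul_cancel₀ q_sub_one, one_mul]
    rw [this]
    exact (Algebra.adjoin K (QGGens m N)).smul_mem ((Algebra.adjoin K (QGGens m N)).sub_mem
      (Algebra.subset_adjoin (show _ ∈ QGGens m N from Or.inr ⟨l, l.2, Or.inl rfl⟩))
      (Algebra.adjoin K (QGGens m N)).one_mem) _
  · rw [RingHom.mapMatrix_apply, Matrix.diagonal_map (map_zero _), Dl_apply]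
    have h1 : ∀ k : Fin N, kr (Pi.mulSingle k (Matrix.single l l (1 : ℚ))) =
        Matrix.diagonal (fun f => if f k = l then 1 else 0) := by
      intro k
      have : (Pi.mulSingle k (Matrix.single l l (1 : ℚ)) : Fin N → Matrix (Fin m) (Fin m) ℚ) =
        fun t => Matrix.diagonal (if t = k then Pi.single l 1 else 1) := by
        funext t
        by_cases htk : t = k
        · subst htk; simp [Matrix.diagonal_single]
        · simp [htk]
      rw [this, kr_diag]
      congr 1
      funext f
      rw [Finset.prod_eq_single k]
      · simp [Pi.single_apply]
      · intro t _ ht; simp [ht]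
      · simp
    simp only [h1]
    ext f g
    rw [Matrix.sum_apply]
    by_cases h : f = g
    · subst h; simp [cnt]
    · simp [Matrix.diagonal_apply_ne _ h]

theorem SS_all (a : Matrix (Fin m) (Fin m) ℚ) :
    Dl a ∈ SS (N := N) (Algebra.adjoin K (QGGens m N)) := by
  set S := SS (N := N) (Algebra.adjoin K (QGGens m N)) with hS
  have hl : ∀ i k j : Fin m, i ≠ j → Dl (Matrix.single i k 1) ∈ S → Dl (Matrix.single k j 1) ∈ S →
      Dl (Matrix.single i j 1) ∈ S := by
    intro i k j hij h1 h2
    have : (Matrix.single i j 1 : Matrix (Fin m) (Fin m) ℚ) =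
      Matrix.single i k 1 * Matrix.single k j 1 - Matrix.single k j 1 * Matrix.single i k 1 := by
      rw [Matrix.single_mul_single_same, Matrix.single_mul_single_of_ne _ _ _ _ hij.symm]
      simp
    rw [this, Dl_lie]
    exact S.sub_mem (S.mul_mem h1 h2) (S.mul_mem h2 h1)
  have hd : ∀ d : ℕ, ∀ i j : Fin m, (j : ℕ) = i + d + 1 →
      Dl (Matrix.single i j 1) ∈ S ∧ Dl (Matrix.single j i 1) ∈ S := by
    intro d
    induction d with
    | zero => intro i j h; exact ⟨SS_E i j h, SS_F i j h⟩
    | succ d ih =>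
      intro i j h
      have hij : i ≠ j := by intro hh; rw [hh] at h; omega
      let k : Fin m := ⟨i + d + 1, by omega⟩
      have h1 := ih i k rfl
      have h2 : (j : ℕ) = k + 1 := by show (j : ℕ) = (i + d + 1) + 1; omega
      exact ⟨hl i k j hij h1.1 (SS_E k j h2), hl j k i hij.symm (SS_F k j h2) h1.2⟩
  have hs : ∀ i j : Fin m, Dl (Matrix.single i j 1) ∈ S := by
    intro i j
    rcases lt_trichotomy (i : ℕ) j with h | h | h
    · exact (hd (j - i - 1) i j (by omega)).1
    · rw [← Fin.ext_iff] at h; subst h; exact SS_L i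
    · exact (hd (i - j - 1) j i (by omega)).2
  rw [Matrix.matrix_eq_sum_single a, map_sum]
  refine S.sum_mem fun i _ => ?_
  rw [map_sum]
  refine S.sum_mem fun j _ => ?_
  have : Matrix.single i j (a i j) = a i j • Matrix.single i j 1 := by simp
  rw [this, map_smul]
  exact S.smul_mem (hs i j) _

theorem q_Phi (P : Matrix (Fin N → Fin m) (Fin N → Fin m) ℚ[X]) (a b : Fin N) (f g : Fin N → Fin m) :
    q * Phi (toK.mapMatrix P) a b f g = toK (if g a = g b then P f g else
      X * P f (g ∘ Equiv.swap a b) + if g b < g a then (1 - X ^ 2) * P f g else 0) := by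
  have := mul_inv_cancel₀ q_ne
  rw [Phi]
  split_ifs
  · rw [← mul_assoc, this, one_mul]; rfl
  · simp only [map_add, map_mul, map_sub, map_one, map_pow, toK_X, RingHom.mapMatrix_apply, Matrix.map_apply]
    linear_combination (toK (P f g)) * this
  · simp only [map_add, map_mul, map_zero, toK_X, RingHom.mapMatrix_apply, Matrix.map_apply, add_zero]
    try ring

theorem ev_swap (P : Matrix (Fin N → Fin m) (Fin N → Fin m) ℚ[X])
    (i : ℕ) (h : i + 1 < N) (a b : Fin N) (ha : (a : ℕ) = i) (hb : (b : ℕ) = i + 1)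
    (hP : Rop0 m N i h * toK.mapMatrix P = toK.mapMatrix P * Rop0 m N i h) (f g : Fin N → Fin m) :
    ev.mapMatrix P (f ∘ Equiv.swap a b) (g ∘ Equiv.swap a b) = ev.mapMatrix P f g := by
  rw [comm_iff _ i h a b ha hb] at hP
  have key : ∀ f g : Fin N → Fin m, ev.mapMatrix P (f ∘ Equiv.swap a b) g = ev.mapMatrix P f (g ∘ Equiv.swap a b) := by
    intro f g
    have h1 := congrArg (fun x => q * x) (hP f g)
    have e : (toK.mapMatrix P)ᵀ = toK.mapMatrix Pᵀ := rfl
    simp only [e, q_Phi] at h1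
    have h2 := congrArg ev (toK_inj h1)
    have e2 : ∀ (P : Matrix (Fin N → Fin m) (Fin N → Fin m) ℚ[X]) (f g : Fin N → Fin m), 
      ev (if g a = g b then P f g else
      X * P f (g ∘ Equiv.swap a b) + if g b < g a then (1 - X ^ 2) * P f g else 0) = 
      ev.mapMatrix P f (g ∘ Equiv.swap a b) := by
      intro P f g
      split_ifs with h3
      · have : g ∘ Equiv.swap a b = g := by
          funext t
          by_cases hta : t = a
          · subst hta; simp [h3]
          by_cases htb : t = b
          · subst htb; simp [h3]
          simp [Equiv.swap_apply_of_ne_of_ne hta htb]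
        rw [this]; rfl
      · simp
      · simp
    rw [e2, e2] at h2
    exact h2
  have e3 : (g ∘ Equiv.swap a b) ∘ Equiv.swap a b = g := by funext t; simp
  rw [key, e3]

theorem ev_inv (P : Matrix (Fin N → Fin m) (Fin N → Fin m) ℚ[X])
    (hP : ∀ i h, Rop0 m N i h * toK.mapMatrix P = toK.mapMatrix P * Rop0 m N i h)
    (σ : Equiv.Perm (Fin N)) (f g : Fin N → Fin m) :
    ev.mapMatrix P (f ∘ σ) (g ∘ σ) = ev.mapMatrix P f g := by
  cases N with
  | zero =>
    have h1 : f ∘ σ = f := Subsingleton.elim _ _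
    have h2 : g ∘ σ = g := Subsingleton.elim _ _
    rw [h1, h2]
  | succ n =>
    let M : Submonoid (Equiv.Perm (Fin (n+1))) :=
      { carrier := {σ | ∀ f g : Fin (n+1) → Fin m, ev.mapMatrix P (f ∘ σ) (g ∘ σ) = ev.mapMatrix P f g}
        one_mem' := fun f g => rfl
        mul_mem' := by
          intro σ τ h1 h2 f g
          have := h2 (f ∘ σ) (g ∘ σ)
          rw [h1] at this
          exact this }
    have : σ ∈ M := by
      have hle : Submonoid.closure (Set.range fun i : Fin n => Equiv.swap i.castSucc i.succ) ≤ M := by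
        rw [Submonoid.closure_le]
        rintro _ ⟨i, rfl⟩ f g
        exact ev_swap P i (by omega) _ _ rfl rfl (hP _ _) f g
      rw [Equiv.Perm.mclosure_swap_castSucc_succ] at hle
      exact hle trivial
    exact this f g

theorem core (Y : Matrix (Fin N → Fin m) (Fin N → Fin m) K)
    (hY : ∀ i h, Rop0 m N i h * Y = Y * Rop0 m N i h)
    (hB : ∀ Z ∈ Algebra.adjoin K (QGGens m N), ∀ i h, Rop0 m N i h * Z = Z * Rop0 m N i h) :
    Y ∈ Algebra.adjoin K (QGGens m N) := by
  set B := Algebra.adjoin K (QGGens m N) with hBdef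
  by_contra hYB
  obtain ⟨φ, hφ, hker⟩ := Submodule.exists_le_ker_of_notMem (p := Subalgebra.toSubmodule B) hYB
  have hφB : ∀ Z ∈ B, φ Z = 0 := fun Z hZ => hker hZ
  -- polynomial multiple of Y
  obtain ⟨b, hb⟩ := IsLocalization.exist_integer_multiples_of_finite (nonZeroDivisors ℚ[X])
    (fun p : (Fin N → Fin m) × (Fin N → Fin m) => Y p.1 p.2)
  choose p hp using hb
  obtain ⟨d, hd⟩ := IsLocalization.exist_integer_multiples_of_finite (nonZeroDivisors ℚ[X])
    (fun p : (Fin N → Fin m) × (Fin N → Fin m) => φ (Matrix.single p.1 p.2 1))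
  choose w hw using hd
  have hb0 : toK b ≠ 0 := by
    intro h0
    exact nonZeroDivisors.ne_zero b.2 (toK_inj (by rw [h0, map_zero]))
  have hd0 : toK d ≠ 0 := by
    intro h0
    exact nonZeroDivisors.ne_zero d.2 (toK_inj (by rw [h0, map_zero]))
  let ψ : Matrix (Fin N → Fin m) (Fin N → Fin m) ℚ[X] → ℚ[X] := fun P => ∑ f, ∑ g, P f g * w (f, g)
  have hψ : ∀ P, toK (ψ P) = toK d * φ (toK.mapMatrix P) := by
    intro P
    conv_rhs => rw [Matrix.matrix_eq_sum_single (toK.mapMatrix P)]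
    simp only [ψ, map_sum, Finset.mul_sum, map_mul]
    refine Finset.sum_congr rfl fun f _ => Finset.sum_congr rfl fun g _ => ?_
    have e : Matrix.single f g (toK.mapMatrix P f g) = toK (P f g) • Matrix.single f g (1 : K) := by
      rw [Matrix.smul_single, smul_eq_mul, mul_one]; rfl
    rw [e, map_smul]
    have := hw (f, g)
    simp only [Algebra.smul_def] at this
    rw [this, smul_eq_mul]
    ring
  have hdiv : ∀ k : ℕ, ∀ P : Matrix (Fin N → Fin m) (Fin N → Fin m) ℚ[X],
      (∀ i h, Rop0 m N i h * toK.mapMatrix P = toK.mapMatrix P * Rop0 m N i h) →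
      (X - C 1) ^ k ∣ ψ P := by
    intro k
    induction k with
    | zero => intro P _; simp
    | succ k ih =>
      intro P hP
      obtain ⟨Q, hQB, hQe⟩ := inv_mem (SS B) SS_all (ev.mapMatrix P) (ev_inv P hP)
      have hdv : ∀ f g, (X - C 1) ∣ (P - Q) f g := by
        intro f g
        rw [Polynomial.dvd_iff_isRoot]
        have := congrFun (congrFun hQe f) g
        simp only [RingHom.mapMatrix_apply, Matrix.map_apply, coe_evalRingHom] at this
        simp [Polynomial.IsRoot, this]
      choose P' hP' using hdv
      have hPQ : P = Q + (X - C 1 : ℚ[X]) • Matrix.of P' := by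
        ext1 f g
        have := hP' f g
        rw [Matrix.sub_apply] at this
        simp only [Matrix.add_apply, Matrix.smul_apply, Matrix.of_apply, smul_eq_mul]
        rw [← this]; ring
      have hmap : toK.mapMatrix P = toK.mapMatrix Q + (q - 1) • toK.mapMatrix (Matrix.of P') := by
        rw [hPQ, map_add]
        congr 1
        ext f g
        simp [RX]
      have hP'c : ∀ i h, Rop0 m N i h * toK.mapMatrix (Matrix.of P') = toK.mapMatrix (Matrix.of P') * Rop0 m N i h := by
        intro i h
        have h1 := hP i h
        rw [hmap, mul_add, add_mul, hB _ hQB i h] at h1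
        have h2 := add_left_cancel h1
        rw [mul_smul_comm, smul_mul_assoc] at h2
        exact smul_right_injective _ q_sub_one h2
      have hψQ : ψ Q = 0 := by
        apply toK_inj
        rw [hψ, hφB _ hQB, mul_zero, map_zero]
      have hψP : ψ P = (X - C 1) * ψ (Matrix.of P') := by
        apply toK_inj
        rw [map_mul, hψ, hψ, hmap, map_add, hφB _ hQB, map_smul, zero_add]
        simp only [map_sub, toK_X, map_one, smul_eq_mul]
        ring
      rw [hψP, pow_succ']
      exact mul_dvd_mul_left _ (ih _ hP'c)
  have hbY : toK.mapMatrix (Matrix.of fun f g => p (f, g)) = toK b • Y := by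
    ext f g
    have := hp (f, g)
    simp only [Algebra.smul_def] at this
    simpa using this
  have h0 : ψ (Matrix.of fun f g => p (f, g)) = 0 := by
    by_contra hne
    have h1 := hdiv ((ψ (Matrix.of fun f g => p (f, g))).natDegree + 1) (Matrix.of fun f g => p (f, g)) (by
      intro i h
      rw [hbY, mul_smul_comm, smul_mul_assoc, hY])
    have h2 := Polynomial.natDegree_le_of_dvd h1 hne
    rw [Polynomial.natDegree_pow, Polynomial.natDegree_X_sub_C] at h2
    omega
  have h3 := hψ (Matrix.of fun f g => p (f, g))
  rw [h0, map_zero, hbY, map_smul, smul_eq_mul] at h3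
  exact mul_ne_zero hd0 (mul_ne_zero hb0 hφ) h3.symm

theorem B_comm (Z : Matrix (Fin N → Fin m) (Fin N → Fin m) K) (hZ : Z ∈ Algebra.adjoin K (QGGens m N))
    (i : ℕ) (h : i + 1 < N) : Rop0 m N i h * Z = Z * Rop0 m N i h := by
  have hle : Algebra.adjoin K (QGGens m N) ≤ Subalgebra.centralizer K {Rop0 m N i h} := by
    rw [Algebra.adjoin_le_iff]
    intro Z hZ
    rw [SetLike.mem_coe, Subalgebra.mem_centralizer_iff]
    intro R hR
    rw [Set.mem_singleton_iff] at hR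
    subst hR
    rcases hZ with ⟨j, _, rfl | rfl⟩ | ⟨l, _, rfl | rfl⟩
    · exact comm_E j i h
    · exact comm_F j i h
    · exact comm_diag (fun _ => Lmat m l) i h ⟨i, by omega⟩ ⟨i+1, h⟩ rfl rfl _ rfl rfl
    · exact comm_diag (fun _ => LmatInv m l) i h ⟨i, by omega⟩ ⟨i+1, h⟩ rfl rfl _ rfl rfl
  exact (Subalgebra.mem_centralizer_iff K).1 (hle hZ) _ rfl

theorem A_transpose (a : Matrix (Fin N → Fin m) (Fin N → Fin m) K)
    (ha : a ∈ Algebra.adjoin K (HeckeGens m N)) : aᵀ ∈ Algebra.adjoin K (HeckeGens m N) := by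
  induction ha using Algebra.adjoin_induction with
  | mem x hx =>
    obtain ⟨i, h, rfl⟩ := hx
    rw [Rop0_symm]
    exact Algebra.subset_adjoin ⟨i, h, rfl⟩
  | algebraMap r =>
    have : (algebraMap K (Matrix (Fin N → Fin m) (Fin N → Fin m) K) r)ᵀ = algebraMap K _ r := by
      rw [Matrix.algebraMap_eq_diagonal, Matrix.diagonal_transpose]
    rw [this]
    exact Subalgebra.algebraMap_mem _ _
  | add x y _ _ h1 h2 => rw [Matrix.transpose_add]; exact Subalgebra.add_mem _ h1 h2
  | mul x y _ _ h1 h2 => rw [Matrix.transpose_mul]; exact Subalgebra.mul_mem _ h2 h1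

theorem cent_A : Subalgebra.centralizer K ((Algebra.adjoin K (HeckeGens m N) : Subalgebra K
        (Matrix (Fin N → Fin m) (Fin N → Fin m) K)) : Set _)
      = Algebra.adjoin K (QGGens m N) := by
  apply le_antisymm
  · intro Y hY
    rw [Subalgebra.mem_centralizer_iff] at hY
    exact core Y (fun i h => hY _ (Algebra.subset_adjoin ⟨i, h, rfl⟩)) B_comm
  · intro Z hZ
    rw [Subalgebra.mem_centralizer_iff]
    have hle : Algebra.adjoin K (HeckeGens m N) ≤ Subalgebra.centralizer K {Z} := by
      rw [Algebra.adjoin_le_iff]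
      rintro _ ⟨i, h, rfl⟩
      rw [SetLike.mem_coe, Subalgebra.mem_centralizer_iff]
      intro R hR
      rw [Set.mem_singleton_iff] at hR
      subst hR
      exact (B_comm R hZ i h).symm
    intro a ha
    exact ((Subalgebra.mem_centralizer_iff K).1 (hle ha) Z rfl).symm

theorem cent_B : Subalgebra.centralizer K ((Algebra.adjoin K (QGGens m N) : Subalgebra K
        (Matrix (Fin N → Fin m) (Fin N → Fin m) K)) : Set _)
      = Algebra.adjoin K (HeckeGens m N) := by
  rw [← cent_A]
  apply le_antisymm
  · intro Y hY
    rw [Subalgebra.mem_centralizer_iff] at hY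
    refine dc (fun s hs => formally_real s hs) _ A_transpose Y fun Z hZ => ?_
    exact (hY Z ((Subalgebra.mem_centralizer_iff K).2 hZ)).symm
  · intro a ha
    rw [Subalgebra.mem_centralizer_iff]
    intro Z hZ
    exact ((Subalgebra.mem_centralizer_iff K).1 hZ a ha).symm

end spec
end SW

/-- Quantum Schur–Weyl duality (double centralizer property): the subalgebra
`A` of `End_K(V^{⊗N})` generated by the Hecke operators and the subalgebra `B`
generated by the quantum group operators are each other's centralizers. -/
theorem schur_weyl_double_centralizer (m N : ℕ) (hN : 1 ≤ N) :
    Subalgebra.centralizer K ((Algebra.adjoin K (HeckeGens m N) : Subalgebra K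
        (Matrix (Fin N → Fin m) (Fin N → Fin m) K)) : Set _)
      = Algebra.adjoin K (QGGens m N) ∧
    Subalgebra.centralizer K ((Algebra.adjoin K (QGGens m N) : Subalgebra K
        (Matrix (Fin N → Fin m) (Fin N → Fin m) K)) : Set _)
      = Algebra.adjoin K (HeckeGens m N) := by
  exact ⟨SW.cent_A, SW.cent_B⟩
end
end

section
/- Faithfulness of the Hecke algebra action for m ≥ N: if m ≥ N, then the K-subalgebra of End_K(V^{⊗N}) generated by the Hecke operators R_i := Id^{⊗(i−1)} ⊗ R ⊗ Id^{⊗(N−i−1)} (1 ≤ i ≤ N−1) has dimension N! over K. (This is the paper's claim that for m ≥ N the Schur–Weyl map ℋ_N → End_{U_q(gl_m)}(V^{⊗N}) is an isomorphism, combined with dim ℋ_N = N!.) -/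
set_option synthInstance.maxHeartbeats 400000
set_option maxHeartbeats 1000000

noncomputable section

namespace HeckeAux

open Equiv
open scoped Matrix

/-- adjacent transposition -/
def sw (N i : ℕ) (h : i + 1 < N) : Perm (Fin N) :=
  swap ⟨i, Nat.lt_of_succ_lt h⟩ ⟨i + 1, h⟩

lemma sw_mul_self (N i : ℕ) (h : i + 1 < N) : sw N i h * sw N i h = 1 := by
  simp [sw]

lemma sw_inv (N i : ℕ) (h : i + 1 < N) : (sw N i h)⁻¹ = sw N i h := by
  simp [sw]

lemma sw_left (N i : ℕ) (h : i + 1 < N) :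
    sw N i h ⟨i, Nat.lt_of_succ_lt h⟩ = ⟨i + 1, h⟩ := by simp [sw]

lemma sw_right (N i : ℕ) (h : i + 1 < N) :
    sw N i h ⟨i + 1, h⟩ = ⟨i, Nat.lt_of_succ_lt h⟩ := by simp [sw]

lemma sw_val (N i : ℕ) (h : i + 1 < N) (x : Fin N) :
    ((sw N i h x : Fin N) : ℕ) =
      if (x : ℕ) = i then i + 1 else if (x : ℕ) = i + 1 then i else x := by
  simp only [sw, swap_apply_def, Fin.ext_iff]
  split_ifs <;> rfl

lemma sw_lt (N i : ℕ) (h : i + 1 < N) (x y : Fin N)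
    (h1 : ¬ ((x : ℕ) = i ∧ (y : ℕ) = i + 1)) (h2 : ¬ ((x : ℕ) = i + 1 ∧ (y : ℕ) = i)) :
    sw N i h x < sw N i h y ↔ x < y := by
  rw [Fin.lt_def, Fin.lt_def, sw_val, sw_val]
  split_ifs <;> omega

lemma Rop_entry (m N i : ℕ) (h : i + 1 < N) (f g : Fin N → Fin m) :
    Rop0 m N i h f g =
      if g ⟨i, Nat.lt_of_succ_lt h⟩ = g ⟨i + 1, h⟩ then (if f = g then q⁻¹ else 0)
      else (if f = g ∘ sw N i h then 1 else 0) +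
        (if g ⟨i + 1, h⟩ < g ⟨i, Nat.lt_of_succ_lt h⟩ then (if f = g then q⁻¹ - q else 0) else 0) := by
  have hp : (∏ t : Fin N, (if (t : ℕ) = i ∨ (t : ℕ) = i + 1 then (1 : K)
        else if f t = g t then 1 else 0)) =
      if (∀ t : Fin N, (t : ℕ) ≠ i → (t : ℕ) ≠ i + 1 → f t = g t) then 1 else 0 := by
    split_ifs with hh
    · apply Finset.prod_eq_one
      intro t _
      split_ifs with h1 h2
      · rfl
      · rfl
      · push Not at h1
        exact absurd (hh t h1.1 h1.2) h2
    · push Not at hh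
      obtain ⟨t, h1, h2, h3⟩ := hh
      apply Finset.prod_eq_zero (Finset.mem_univ t)
      simp [h1, h2, h3]
  have e1 : f = g ↔ (f ⟨i, Nat.lt_of_succ_lt h⟩ = g ⟨i, Nat.lt_of_succ_lt h⟩ ∧
      f ⟨i + 1, h⟩ = g ⟨i + 1, h⟩) ∧
      (∀ t : Fin N, (t : ℕ) ≠ i → (t : ℕ) ≠ i + 1 → f t = g t) := by
    constructor
    · rintro rfl; simp
    · rintro ⟨⟨h1, h2⟩, h3⟩
      funext t
      by_cases c1 : (t : ℕ) = i
      · obtain rfl : t = ⟨i, Nat.lt_of_succ_lt h⟩ := Fin.ext c1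
        exact h1
      by_cases c2 : (t : ℕ) = i + 1
      · obtain rfl : t = ⟨i + 1, h⟩ := Fin.ext c2
        exact h2
      exact h3 t c1 c2
  have e2 : f = g ∘ sw N i h ↔ (f ⟨i, Nat.lt_of_succ_lt h⟩ = g ⟨i + 1, h⟩ ∧
      f ⟨i + 1, h⟩ = g ⟨i, Nat.lt_of_succ_lt h⟩) ∧
      (∀ t : Fin N, (t : ℕ) ≠ i → (t : ℕ) ≠ i + 1 → f t = g t) := by
    have hs : ∀ t : Fin N, (t : ℕ) ≠ i → (t : ℕ) ≠ i + 1 → sw N i h t = t := by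
      intro t h1 h2
      apply Fin.ext
      rw [sw_val]; simp [h1, h2]
    constructor
    · rintro rfl
      refine ⟨⟨by simp [sw_left], by simp [sw_right]⟩, ?_⟩
      intro t h1 h2
      simp [hs t h1 h2]
    · rintro ⟨⟨h1, h2⟩, h3⟩
      funext t
      by_cases c1 : (t : ℕ) = i
      · obtain rfl : t = ⟨i, Nat.lt_of_succ_lt h⟩ := Fin.ext c1
        simp [h1, sw_left]
      by_cases c2 : (t : ℕ) = i + 1
      · obtain rfl : t = ⟨i + 1, h⟩ := Fin.ext c2
        simp [h2, sw_right]
      simp [hs t c1 c2, h3 t c1 c2]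
  unfold Rop0 R0mat
  rw [hp]
  simp only [e1, e2, Prod.mk.injEq]
  by_cases hA : (∀ t : Fin N, (t : ℕ) ≠ i → (t : ℕ) ≠ i + 1 → f t = g t)
  · simp only [ite_and, iff_true_intro hA, and_true, if_true, mul_one]
  · simp [hA]

/-- basis vector -/
def bv (m N : ℕ) (g : Fin N → Fin m) : (Fin N → Fin m) → K := Pi.single g 1

lemma Rop_bv (m N i : ℕ) (h : i + 1 < N) (g : Fin N → Fin m) :
    Rop0 m N i h *ᵥ bv m N g =
      if g ⟨i, Nat.lt_of_succ_lt h⟩ = g ⟨i + 1, h⟩ then q⁻¹ • bv m N g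
      else bv m N (g ∘ sw N i h) +
        (if g ⟨i + 1, h⟩ < g ⟨i, Nat.lt_of_succ_lt h⟩ then (q⁻¹ - q) • bv m N g else 0) := by
  funext f
  simp only [bv, Matrix.mulVec_single_one, Matrix.col_apply, Rop_entry]
  by_cases h1 : g ⟨i, Nat.lt_of_succ_lt h⟩ = g ⟨i + 1, h⟩
  · simp only [if_pos h1, Pi.smul_apply, Pi.single_apply, smul_eq_mul, mul_ite, mul_one, mul_zero]
  · by_cases h4 : g ⟨i + 1, h⟩ < g ⟨i, Nat.lt_of_succ_lt h⟩
    · simp only [if_neg h1, if_pos h4, Pi.add_apply, Pi.smul_apply, Pi.single_apply, smul_eq_mul,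
        mul_ite, mul_one, mul_zero]
    · simp only [if_neg h1, if_neg h4, Pi.add_apply, Pi.zero_apply, Pi.single_apply]

/-- the regular module -/
abbrev Reg (N : ℕ) : Type := Perm (Fin N) →₀ K

/-- basis of the regular module -/
def b {N : ℕ} (w : Perm (Fin N)) : Reg N := Finsupp.single w 1

/-- left action -/
def lam (N i : ℕ) (h : i + 1 < N) : Reg N →ₗ[K] Reg N :=
  Finsupp.linearCombination K (fun w => b (w * sw N i h) +
    if w ⟨i + 1, h⟩ < w ⟨i, Nat.lt_of_succ_lt h⟩ then (q⁻¹ - q) • b w else 0)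

/-- right action -/
def rho (N i : ℕ) (h : i + 1 < N) : Reg N →ₗ[K] Reg N :=
  Finsupp.linearCombination K (fun w => b (sw N i h * w) +
    if w⁻¹ ⟨i + 1, h⟩ < w⁻¹ ⟨i, Nat.lt_of_succ_lt h⟩ then (q⁻¹ - q) • b w else 0)

lemma lam_b (N i : ℕ) (h : i + 1 < N) (w : Perm (Fin N)) :
    lam N i h (b w) = b (w * sw N i h) +
    if w ⟨i + 1, h⟩ < w ⟨i, Nat.lt_of_succ_lt h⟩ then (q⁻¹ - q) • b w else 0 := by
  rw [lam, b, Finsupp.linearCombination_single, one_smul]; rfl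

lemma rho_b (N i : ℕ) (h : i + 1 < N) (w : Perm (Fin N)) :
    rho N i h (b w) = b (sw N i h * w) +
    if w⁻¹ ⟨i + 1, h⟩ < w⁻¹ ⟨i, Nat.lt_of_succ_lt h⟩ then (q⁻¹ - q) • b w else 0 := by
  rw [rho, b, Finsupp.linearCombination_single, one_smul]; rfl

lemma reg_ext {N : ℕ} {M : Type*} [AddCommGroup M] [Module K M] (f g : Reg N →ₗ[K] M)
    (h : ∀ w, f (b w) = g (b w)) (u : Reg N) : f u = g u := by
  have : f = g := by
    apply Finsupp.lhom_ext'
    intro w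
    apply LinearMap.ext_ring
    exact h w
  rw [this]

lemma lam_rho (N i : ℕ) (h : i + 1 < N) (j : ℕ) (hj : j + 1 < N) (u : Reg N) :
    lam N i h (rho N j hj u) = rho N j hj (lam N i h u) := by
  apply reg_ext (lam N i h ∘ₗ rho N j hj) (rho N j hj ∘ₗ lam N i h)
  intro w
  simp only [LinearMap.comp_apply]
  set a : Fin N := ⟨i, Nat.lt_of_succ_lt h⟩ with ha
  set a' : Fin N := ⟨i + 1, h⟩ with ha'
  set c : Fin N := ⟨j, Nat.lt_of_succ_lt hj⟩ with hc
  set c' : Fin N := ⟨j + 1, hj⟩ with hc'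
  have haa : a < a' := by simp [ha, ha', Fin.lt_def]
  have hcc : c < c' := by simp [hc, hc', Fin.lt_def]
  have L : ∀ v, lam N i h (b v) = b (v * sw N i h) +
    if v a' < v a then (q⁻¹ - q) • b v else 0 := lam_b N i h
  have Rr : ∀ v, rho N j hj (b v) = b (sw N j hj * v) +
    if v⁻¹ c' < v⁻¹ c then (q⁻¹ - q) • b v else 0 := rho_b N j hj
  have sa : sw N i h a = a' := sw_left N i h
  have sa' : sw N i h a' = a := sw_right N i h
  have sc : sw N j hj c = c' := sw_left N j hj
  have sc' : sw N j hj c' = c := sw_right N j hj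
  by_cases h1 : w a = c ∧ w a' = c'
  · obtain ⟨h1, h2⟩ := h1
    have hs : sw N j hj * w = w * sw N i h := by
      have := Equiv.mul_swap_eq_swap_mul w a a'
      rw [h1, h2] at this
      exact this.symm
    have i1 : w⁻¹ c = a := by rw [← h1]; simp
    have i2 : w⁻¹ c' = a' := by rw [← h2]; simp
    rw [Rr, L]
    simp only [i1, i2, h1, h2, if_neg haa.not_gt, if_neg hcc.not_gt, add_zero]
    rw [L, Rr]
    simp only [mul_inv_rev, sw_inv, Perm.mul_apply, h1, h2, i1, i2, sa, sa', sc, sc', haa, hcc,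
      if_true, hs, mul_assoc]
    rw [← mul_assoc (sw N j hj) w, hs, mul_assoc]
  by_cases h2 : w a = c' ∧ w a' = c
  · obtain ⟨h1, h2⟩ := h2
    have hs : sw N j hj * w = w * sw N i h := by
      have := Equiv.mul_swap_eq_swap_mul w a a'
      rw [h1, h2, swap_comm c' c] at this
      exact this.symm
    have i1 : w⁻¹ c' = a := by rw [← h1]; simp
    have i2 : w⁻¹ c = a' := by rw [← h2]; simp
    rw [Rr, L]
    simp only [i1, i2, h1, h2, if_pos haa, if_pos hcc, hs]
    rw [map_add, map_add, map_smul, map_smul, L, L, Rr, Rr]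
    simp only [mul_inv_rev, sw_inv, Perm.mul_apply, h1, h2, i1, i2, sa, sa', haa, hcc,
      haa.not_gt, hcc.not_gt, if_true, if_false, hs]
    rw [← mul_assoc (sw N j hj) w, hs]
  have k1 : ∀ x y : Fin N, ¬ ((x = c ∧ y = c')) → ¬ (x = c' ∧ y = c) →
      (sw N j hj x < sw N j hj y ↔ x < y) := by
    intro x y u v
    apply sw_lt
    · simpa [hc, hc', Fin.ext_iff] using u
    · simpa [hc, hc', Fin.ext_iff] using v
  have k2 : ∀ x y : Fin N, ¬ ((x = a ∧ y = a')) → ¬ (x = a' ∧ y = a) →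
      (sw N i h x < sw N i h y ↔ x < y) := by
    intro x y u v
    apply sw_lt
    · simpa [ha, ha', Fin.ext_iff] using u
    · simpa [ha, ha', Fin.ext_iff] using v
  have k3 := k1 (w a') (w a) (by tauto) (by tauto)
  have k4 := k2 (w⁻¹ c') (w⁻¹ c)
    (by rintro ⟨u, v⟩; rw [Perm.inv_eq_iff_eq] at u v; exact h2 ⟨u.symm, v.symm⟩)
    (by rintro ⟨u, v⟩; rw [Perm.inv_eq_iff_eq] at u v; exact h1 ⟨v.symm, u.symm⟩)
  rw [Rr, L]
  simp only [map_add, apply_ite (lam N i h), apply_ite (rho N j hj), map_smul, map_zero, L, Rr,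
    mul_inv_rev, sw_inv, Perm.mul_apply, k3, k4, mul_assoc]
  split_ifs <;> simp only [smul_add, add_zero, smul_zero] <;> abel

/-- weighted inversions -/
def cc {m N : ℕ} (g : Fin N → Fin m) (w : Perm (Fin N)) : ℕ :=
  ∑ p : Fin N × Fin N with p.1 < p.2, if w p.2 < w p.1 ∧ g (w p.1) = g (w p.2) then 1 else 0

lemma cc_sw {m N : ℕ} (g : Fin N → Fin m) (w : Perm (Fin N)) (i : ℕ) (h : i + 1 < N)
    (a a' : Fin N) (ha : a = ⟨i, Nat.lt_of_succ_lt h⟩) (ha' : a' = ⟨i + 1, h⟩) :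
    cc g (w * sw N i h) + (if w a' < w a ∧ g (w a) = g (w a') then 1 else 0) =
      cc g w + (if w a < w a' ∧ g (w a) = g (w a') then 1 else 0) := by
  have sa : sw N i h a = a' := by rw [ha, ha']; exact sw_left N i h
  have sa' : sw N i h a' = a := by rw [ha, ha']; exact sw_right N i h
  have hmem : (a, a') ∈ (Finset.univ.filter fun p : Fin N × Fin N => p.1 < p.2) := by
    simp [ha, ha']
  have hss : ∀ x, sw N i h (sw N i h x) = x := by intro x; simp [sw]
  unfold cc
  rw [← Finset.add_sum_erase _ _ hmem, ← Finset.add_sum_erase _ _ hmem]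
  have key : ∑ p ∈ (Finset.univ.filter fun p : Fin N × Fin N => p.1 < p.2).erase (a, a'),
      (if (w * sw N i h) p.2 < (w * sw N i h) p.1 ∧
        g ((w * sw N i h) p.1) = g ((w * sw N i h) p.2) then 1 else 0) =
      ∑ p ∈ (Finset.univ.filter fun p : Fin N × Fin N => p.1 < p.2).erase (a, a'),
      (if w p.2 < w p.1 ∧ g (w p.1) = g (w p.2) then 1 else 0) := by
    apply Finset.sum_nbij' (fun p => (sw N i h p.1, sw N i h p.2))
      (fun p => (sw N i h p.1, sw N i h p.2))
    · rintro ⟨x, y⟩ hp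
      simp only [Finset.mem_erase, ne_eq, Prod.mk.injEq, Finset.mem_filter, Finset.mem_univ,
        true_and, ha, ha', Fin.ext_iff, Fin.lt_def, sw_val] at hp ⊢
      split_ifs <;> omega
    · rintro ⟨x, y⟩ hp
      simp only [Finset.mem_erase, ne_eq, Prod.mk.injEq, Finset.mem_filter, Finset.mem_univ,
        true_and, ha, ha', Fin.ext_iff, Fin.lt_def, sw_val] at hp ⊢
      split_ifs <;> omega
    · rintro ⟨x, y⟩ _; simp [hss]
    · rintro ⟨x, y⟩ _; simp [hss]
    · rintro ⟨x, y⟩ _; rfl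
  rw [key]
  simp only [Perm.mul_apply, sa, sa', eq_comm (a := g (w a'))]
  omega

/-- intertwiner -/
def Phi {m N : ℕ} (g : Fin N → Fin m) : Reg N →ₗ[K] ((Fin N → Fin m) → K) :=
  Finsupp.linearCombination K (fun w => (q⁻¹ ^ cc g w) • bv m N (g ∘ w))

lemma Phi_b {m N : ℕ} (g : Fin N → Fin m) (w : Perm (Fin N)) :
    Phi g (b w) = (q⁻¹ ^ cc g w) • bv m N (g ∘ w) := by
  rw [Phi, b, Finsupp.linearCombination_single, one_smul]

lemma q_ne : q ≠ 0 := RatFunc.X_ne_zero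

lemma Rop_Phi {m N : ℕ} (g : Fin N → Fin m) (hg : Monotone g) (i : ℕ) (h : i + 1 < N)
    (u : Reg N) : Rop0 m N i h *ᵥ Phi g u = Phi g (lam N i h u) := by
  apply reg_ext ((Rop0 m N i h).mulVecLin ∘ₗ Phi g) (Phi g ∘ₗ lam N i h)
  intro w
  simp only [LinearMap.comp_apply, Matrix.mulVecLin_apply]
  have hcc := cc_sw g w i h _ _ rfl rfl
  rw [lam_b, map_add, Phi_b, Phi_b, Matrix.mulVec_smul, Rop_bv]
  set a : Fin N := ⟨i, Nat.lt_of_succ_lt h⟩ with ha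
  set a' : Fin N := ⟨i + 1, h⟩ with ha'
  have hne : w a ≠ w a' := by
    intro e
    have := w.injective e
    simp [ha, ha'] at this
  have hfun : g ∘ ⇑(w * sw N i h) = (g ∘ ⇑w) ∘ ⇑(sw N i h) := by
    funext x; simp
  simp only [Function.comp_apply]
  rw [hfun]
  by_cases he : g (w a) = g (w a')
  · have hf2 : (g ∘ ⇑w) ∘ ⇑(sw N i h) = g ∘ ⇑w := by
      funext x
      simp only [Function.comp_apply, sw, swap_apply_def]
      split_ifs with h1 h2
      · rw [h1]; exact he.symm
      · rw [h2]; exact he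
      · rfl
    rw [if_pos he, hf2]
    rcases lt_or_gt_of_ne hne with hl | hl
    · simp only [he, hl, hl.not_gt, and_true, if_true, if_false, add_zero] at hcc ⊢
      rw [hcc, pow_succ, map_zero, add_zero, smul_smul]
    · simp only [he, hl, hl.not_gt, and_true, if_true, if_false, add_zero] at hcc ⊢
      rw [map_smul, Phi_b, ← hcc, smul_smul, smul_smul, ← add_smul]
      congr 1
      rw [pow_succ]
      have := q_ne
      field_simp
      ring
  · rw [if_neg he]
    simp only [he, and_false, if_false, add_zero] at hcc
    rw [hcc, smul_add]
    congr 1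
    have : g (w a') < g (w a) ↔ w a' < w a := by
      constructor
      · intro hl
        by_contra hh
        exact absurd (hg (not_lt.mp hh)) (not_le.mpr hl)
      · intro hl
        exact lt_of_le_of_ne (hg hl.le) (Ne.symm he)
    simp only [this]
    split_ifs
    · rw [map_smul, Phi_b, smul_comm]
    · simp

lemma exists_L {m N : ℕ} (X : Matrix (Fin N → Fin m) (Fin N → Fin m) K)
    (hX : X ∈ Algebra.adjoin K (HeckeGens m N)) :
    ∃ L : Reg N →ₗ[K] Reg N,
      (∀ g : Fin N → Fin m, Monotone g → ∀ u, X *ᵥ Phi g u = Phi g (L u)) ∧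
      ∀ (j : ℕ) (hj : j + 1 < N) (u), L (rho N j hj u) = rho N j hj (L u) := by
  induction hX using Algebra.adjoin_induction with
  | mem x hx =>
    obtain ⟨i, h, rfl⟩ := hx
    exact ⟨lam N i h, fun g hg u => Rop_Phi g hg i h u, fun j hj u => lam_rho N i h j hj u⟩
  | algebraMap r =>
    refine ⟨r • LinearMap.id, fun g hg u => ?_, fun j hj u => ?_⟩
    · rw [Algebra.algebraMap_eq_smul_one, Matrix.smul_mulVec, Matrix.one_mulVec]
      simp
    · simp
  | add x y _ _ hx hy =>
    obtain ⟨L, h1, h2⟩ := hx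
    obtain ⟨L', h1', h2'⟩ := hy
    refine ⟨L + L', fun g hg u => ?_, fun j hj u => ?_⟩
    · rw [Matrix.add_mulVec, h1 g hg, h1' g hg]; simp
    · simp [h2, h2']
  | mul x y _ _ hx hy =>
    obtain ⟨L, h1, h2⟩ := hx
    obtain ⟨L', h1', h2'⟩ := hy
    refine ⟨L ∘ₗ L', fun g hg u => ?_, fun j hj u => ?_⟩
    · rw [← Matrix.mulVec_mulVec, h1' g hg, h1 g hg]; simp
    · simp [h2, h2']

lemma perm_ind {N : ℕ} (P : Perm (Fin N) → Prop) (h1 : P 1)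
    (hs : ∀ (i : ℕ) (h : i + 1 < N) (w), P w → P (w * sw N i h)) (w : Perm (Fin N)) : P w := by
  rcases N with _ | n
  · rwa [Subsingleton.elim w 1]
  have hw : w ∈ Submonoid.closure
      (Set.range fun i : Fin n => swap i.castSucc i.succ) := by
    rw [Equiv.Perm.mclosure_swap_castSucc_succ]; trivial
  induction hw using Submonoid.closure_induction_right with
  | one => exact h1
  | mul_right x _ y hy ih =>
    obtain ⟨i, rfl⟩ := hy
    exact hs i (by omega) x ih

lemma perm_ind' {N : ℕ} (P : Perm (Fin N) → Prop) (h1 : P 1)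
    (hs : ∀ (i : ℕ) (h : i + 1 < N) (w), P w → P (sw N i h * w)) (w : Perm (Fin N)) : P w := by
  have := perm_ind (fun w => P w⁻¹) (by simpa using h1)
    (fun i h w hw => by rw [mul_inv_rev, sw_inv]; exact hs i h _ hw) w⁻¹
  simpa using this

/-- the standard increasing word -/
def io {m N : ℕ} (hm : N ≤ m) : Fin N → Fin m := Fin.castLE hm

lemma Phi_io_inj {m N : ℕ} (hm : N ≤ m) : Function.Injective (Phi (io hm)) := by
  have hli : LinearIndependent K
      (fun w : Perm (Fin N) => (q⁻¹ ^ cc (io hm) w) • bv m N (io hm ∘ w)) := by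
    have hb : LinearIndependent K (fun f : Fin N → Fin m => bv m N f) := by
      have := (Pi.basisFun K (Fin N → Fin m)).linearIndependent
      convert this using 1
      funext f
      simp [bv, Pi.basisFun_apply]
    have h2 : LinearIndependent K (fun w : Perm (Fin N) => bv m N (io hm ∘ w)) := by
      apply hb.comp (fun w : Perm (Fin N) => io hm ∘ w)
      intro w w' e
      ext x
      have := congrFun e x
      simpa [io, Fin.ext_iff] using this
    exact h2.units_smul (fun w => Units.mk0 (q⁻¹ ^ cc (io hm) w)
      (pow_ne_zero _ (inv_ne_zero q_ne)))
  exact hli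

lemma io_mono {m N : ℕ} (hm : N ≤ m) : Monotone (io hm : Fin N → Fin m) := by
  intro x y h; exact h

lemma X_zero {m N : ℕ} (hm : N ≤ m) (X : Matrix (Fin N → Fin m) (Fin N → Fin m) K)
    (hX : X ∈ Algebra.adjoin K (HeckeGens m N)) (h0 : X *ᵥ Phi (io hm) (b 1) = 0) : X = 0 := by
  obtain ⟨L, h1, h2⟩ := exists_L X hX
  have hL1 : L (b 1) = 0 := by
    apply Phi_io_inj hm
    rw [← h1 _ (io_mono hm), h0, map_zero]
  have hL : ∀ w, L (b w) = 0 := by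
    apply perm_ind' (fun w => L (b w) = 0) hL1
    intro i h w hw
    have := h2 i h (b w)
    rw [hw, map_zero, rho_b, map_add] at this
    split_ifs at this
    · simpa [hw] using this
    · simpa using this
  have hcol : ∀ f, X *ᵥ bv m N f = 0 := by
    intro f
    have := h1 _ (Tuple.monotone_sort f) (b (Tuple.sort f)⁻¹)
    rw [hL, map_zero, Phi_b, Matrix.mulVec_smul] at this
    have hne : q⁻¹ ^ cc (f ∘ ⇑(Tuple.sort f)) (Tuple.sort f)⁻¹ ≠ 0 :=
      pow_ne_zero _ (inv_ne_zero q_ne)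
    have h3 := (smul_eq_zero.mp this).resolve_left hne
    convert h3 using 3
    funext x
    simp
  ext f g
  have := congrFun (hcol g) f
  simpa [bv] using this

/-- evaluation at the standard vector -/
def ev {m N : ℕ} (hm : N ≤ m) :
    (Algebra.adjoin K (HeckeGens m N) : Subalgebra K
          (Matrix (Fin N → Fin m) (Fin N → Fin m) K)) →ₗ[K] ((Fin N → Fin m) → K) where
  toFun X := X.1 *ᵥ Phi (io hm) (b 1)
  map_add' X Y := by simp [Matrix.add_mulVec]
  map_smul' r X := by simp [Matrix.smul_mulVec]

lemma ev_apply {m N : ℕ} (hm : N ≤ m) (X) : ev (m := m) (N := N) hm X =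
    X.1 *ᵥ Phi (io hm) (b 1) := rfl

lemma ev_inj {m N : ℕ} (hm : N ≤ m) : Function.Injective (ev (m := m) (N := N) hm) := by
  rw [injective_iff_map_eq_zero]
  intro X hX
  exact Subtype.ext (X_zero hm X.1 X.2 hX)

lemma ev_range {m N : ℕ} (hm : N ≤ m) :
    LinearMap.range (ev (m := m) (N := N) hm) = LinearMap.range (Phi (io hm)) := by
  apply le_antisymm
  · rintro _ ⟨X, rfl⟩
    obtain ⟨L, h1, _⟩ := exists_L X.1 X.2
    exact ⟨L (b 1), (h1 _ (io_mono hm) _).symm⟩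
  · have hb : ∀ w, Phi (io hm) (b w) ∈ LinearMap.range (ev (m := m) (N := N) hm) := by
      apply perm_ind
      · exact ⟨1, by rw [ev_apply]; simp⟩
      · rintro i h w ⟨X, hX⟩
        have hR : Rop0 m N i h ∈ Algebra.adjoin K (HeckeGens m N) :=
          Algebra.subset_adjoin ⟨i, h, rfl⟩
        have e1 : ev hm (⟨_, hR⟩ * X) = Phi (io hm) (lam N i h (b w)) := by
          rw [← Rop_Phi _ (io_mono hm), ← hX, ev_apply, ev_apply]
          simp [Matrix.mulVec_mulVec]
        rw [lam_b, map_add] at e1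
        have e2 := eq_sub_of_add_eq e1.symm
        rw [e2]
        apply Submodule.sub_mem _ (LinearMap.mem_range_self _ _)
        split_ifs
        · rw [map_smul]
          exact Submodule.smul_mem _ _ ⟨X, hX⟩
        · rw [map_zero]; exact Submodule.zero_mem _
    rintro _ ⟨u, rfl⟩
    rw [Phi, Finsupp.linearCombination_apply]
    apply Submodule.sum_mem
    intro w _
    apply Submodule.smul_mem
    rw [← Phi_b]
    exact hb w

end HeckeAux

/-- Faithfulness of the Hecke algebra action for `m ≥ N`: the `K`-subalgebra of
`End_K(V^{⊗N})` generated by the Hecke operators `R_i` has dimension `N!` over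
`K`. (The Schur–Weyl map `ℋ_N → End_{U_q(gl_m)}(V^{⊗N})` is an isomorphism for
`m ≥ N`, and `dim ℋ_N = N!`.) -/
theorem hecke_action_faithful (m N : ℕ) (hN : 1 ≤ N) (hm : N ≤ m) :
    Module.finrank K
        (Algebra.adjoin K (HeckeGens m N) : Subalgebra K
          (Matrix (Fin N → Fin m) (Fin N → Fin m) K))
      = N.factorial := by
  rw [← LinearMap.finrank_range_of_inj (HeckeAux.ev_inj hm), HeckeAux.ev_range hm,
    LinearMap.finrank_range_of_inj (HeckeAux.Phi_io_inj hm), Module.finrank_finsupp_self,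
    Fintype.card_perm, Fintype.card_fin]
end
end
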